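/- Let d ≥ 3 be a fixed integer and p an odd prime with gcd(p,d) = 1. For every ε > 0 there exists N such that for all n ≥ N, the number of permutations P of [n]×[d] for which the matrix A(P), reduced modulo p, is singular over F_p (i.e., has determinant 0 in F_p) is at most ((1+ε)/(p−1))·(nd)!. -/

import Mathlib

open Finset

/-- Adjacency matrix of the directed configuration model. -/
def adjMat (n d : ℕ) (P : Equiv.Perm (Fin n × Fin d)) : Matrix (Fin n) (Fin n) ℤ :=
  fun k l => ((Finset.univ.filter (fun i : Fin d => (P (k, i)).1 = l)).card : ℤ)


/-- number of occurrences of the letter `a` in the word `f` -/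
def cnt {X σ : Type*} [Fintype X] [DecidableEq σ] (f : X → σ) (a : σ) : ℕ :=
  (univ.filter (fun x => f x = a)).card

lemma cnt_eq_card {X σ : Type*} [Fintype X] [DecidableEq σ] (f : X → σ) (a : σ) :
    cnt f a = Fintype.card {x // f x = a} := by
  rw [cnt, Fintype.card_subtype]

lemma sum_cnt {X σ : Type*} [Fintype X] [Fintype σ] [DecidableEq σ] (f : X → σ) :
    ∑ a, cnt f a = Fintype.card X := by
  unfold cnt
  rw [← Finset.card_eq_sum_card_fiberwise (fun _ _ => Finset.mem_univ _)]
  rfl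

lemma prod_cnt {X σ M : Type*} [Fintype X] [Fintype σ] [DecidableEq σ] [CommMonoid M]
    (f : X → σ) (g : σ → M) : ∏ x, g (f x) = ∏ a, g a ^ cnt f a := by
  unfold cnt
  rw [← Finset.prod_fiberwise (s := univ) (g := f)]
  apply Finset.prod_congr rfl
  intro a _
  rw [Finset.prod_congr rfl (g := fun _ => g a), Finset.prod_const]
  intro x hx
  simp at hx
  rw [hx]

lemma card_perm_comp {X σ : Type*} [Fintype X] [DecidableEq X] [Fintype σ] [DecidableEq σ]
    (f w : X → σ) :
    (univ.filter (fun P : Equiv.Perm X => f ∘ P = w)).card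
      = if (∀ a, cnt w a = cnt f a) then ∏ a, (cnt f a).factorial else 0 := by
  split_ifs with h
  · have e : ∀ a, Nonempty ({x // w x = a} ≃ {x // f x = a}) := by
      intro a
      rw [← Fintype.card_eq, ← cnt_eq_card, ← cnt_eq_card, h]
    let P0 : Equiv.Perm X := Equiv.ofFiberEquiv (fun a => (e a).some)
    have hP0 : ∀ x, f (P0 x) = w x := fun x => Equiv.ofFiberEquiv_map _ x
    have hst := DomMulAct.stabilizer_card (f := f)
    have hst2 : ∏ a, (cnt f a).factorial = Fintype.card {g : Equiv.Perm X // f ∘ g = f} := by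
      rw [hst]; simp only [cnt_eq_card]
    rw [hst2, Fintype.card_subtype]
    apply Finset.card_bij (fun P _ => P0.symm.trans P)
    · intro P hP
      simp at hP ⊢
      funext x
      have := congrFun hP (P0.symm x)
      simp at this ⊢
      rw [this, ← hP0]; simp
    · intro P _ Q _ hPQ
      ext x
      have := congrArg (fun R : Equiv.Perm X => R (P0 x)) hPQ
      simpa using this
    · intro Q hQ
      refine ⟨P0.trans Q, ?_, ?_⟩
      · simp at hQ ⊢
        funext x
        have := congrFun hQ (P0 x)
        simp at this ⊢
        rw [this, hP0]
      · ext x; simp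
  · rw [Finset.card_eq_zero, Finset.filter_eq_empty_iff]
    intro P _ hP
    apply h
    intro a
    rw [cnt_eq_card, cnt_eq_card]
    apply Fintype.card_congr
    exact P.subtypeEquiv (fun x => by rw [← hP]; rfl)

lemma perm_sum {X σ R : Type*} [Fintype X] [DecidableEq X] [Fintype σ] [DecidableEq σ]
    [CommSemiring R] (f : X → σ) (Φ : (X → σ) → R) :
    ∑ P : Equiv.Perm X, Φ (f ∘ P) = ((∏ a, (cnt f a).factorial : ℕ) : R) *
      ∑ w ∈ univ.filter (fun w : X → σ => ∀ a, cnt w a = cnt f a), Φ w := by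
  rw [← Finset.sum_fiberwise (s := univ) (g := fun P : Equiv.Perm X => f ∘ P)]
  rw [Finset.mul_sum, Finset.sum_filter]
  apply Finset.sum_congr rfl
  intro w _
  rw [Finset.sum_congr rfl (g := fun _ => Φ w), Finset.sum_const, card_perm_comp]
  · split_ifs with h
    · simp
    · simp
  · intro P hP
    simp at hP
    rw [hP]

/-- Positive generating function bound, product over rows. -/
lemma pos_bound {n d : ℕ} {σ : Type*} [Fintype σ] [DecidableEq σ]
    (f : Fin n × Fin d → σ) (φ : (Fin d → σ) → Prop) [DecidablePred φ]
    (x : σ → ℝ) (hx : ∀ a, 0 ≤ x a) :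
    ((univ.filter (fun P : Equiv.Perm (Fin n × Fin d) =>
        ∀ k, φ (fun i => f (P (k, i))))).card : ℝ) * ∏ a, x a ^ cnt f a
      ≤ ((∏ a, (cnt f a).factorial : ℕ) : ℝ)
        * (∑ ρ ∈ univ.filter φ, ∏ i, x (ρ i)) ^ n := by
  classical
  have h1 := perm_sum (R := ℝ) f (fun w => (if ∀ k, φ (fun i => w (k, i)) then 1 else 0))
  simp only [Function.comp_apply] at h1
  rw [Finset.sum_boole] at h1
  rw [h1, mul_assoc]
  apply mul_le_mul_of_nonneg_left _ (by positivity)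
  rw [Finset.sum_mul]
  have h2 : (∑ ρ ∈ univ.filter φ, ∏ i, x (ρ i)) ^ n
      = ∑ w : Fin n × Fin d → σ, (if ∀ k, φ (fun i => w (k, i)) then 1 else 0) * ∏ s, x (w s) := by
    rw [Finset.sum_filter, Fintype.sum_pow]
    rw [← (Equiv.curry (Fin n) (Fin d) σ).sum_comp]
    apply Finset.sum_congr rfl
    intro w _
    simp only [Equiv.curry_apply, Function.curry]
    rw [Fintype.prod_prod_type]
    split_ifs with h
    · rw [one_mul]
      apply Finset.prod_congr rfl
      intro k _
      exact if_pos (h k)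
    · push Not at h
      obtain ⟨k, hk⟩ := h
      rw [zero_mul]
      apply Finset.prod_eq_zero (Finset.mem_univ k)
      exact if_neg hk
  rw [h2]
  refine le_trans (le_of_eq ?_) (Finset.sum_le_sum_of_subset_of_nonneg (Finset.filter_subset (fun w : Fin n × Fin d → σ => ∀ a, cnt w a = cnt f a) univ) ?_)
  · apply Finset.sum_congr rfl
    intro w hw
    simp at hw
    rw [prod_cnt w x]
    simp only [hw]
  · intro w _ _
    apply mul_nonneg
    · split_ifs <;> norm_num
    · exact Finset.prod_nonneg (fun s _ => hx _)

lemma cnt_fst {n d : ℕ} {σ : Type*} [DecidableEq σ] (v : Fin n → σ) (a : σ) :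
    cnt (fun s : Fin n × Fin d => v s.1) a = cnt v a * d := by
  unfold cnt
  have : (univ.filter (fun s : Fin n × Fin d => v s.1 = a))
      = (univ.filter (fun k => v k = a)) ×ˢ (univ : Finset (Fin d)) := by
    ext s; simp
  rw [this, Finset.card_product, Finset.card_univ, Fintype.card_fin]

lemma factorial_upper (k : ℕ) :
    (k.factorial : ℝ) ≤ Real.exp 1 * (k + 1) * ((k : ℝ) / Real.exp 1) ^ k := by
  rcases Nat.eq_zero_or_pos k with rfl | hk
  · simp
  have key : ∀ k : ℕ, 1 ≤ k → (k.factorial : ℝ) ≤ Real.exp 1 * k * ((k : ℝ) / Real.exp 1) ^ k := by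
    intro k hk
    induction k, hk using Nat.le_induction with
    | base => simp
    | succ k hk ih =>
      rw [Nat.factorial_succ]
      push_cast
      have hk0 : (0:ℝ) < k := by exact_mod_cast hk
      have he := Real.exp_pos 1
      -- need  e * k^(k+1) ≤ (k+1)^(k+1)
      have h1 : Real.exp 1 * (k:ℝ)^(k+1) ≤ ((k:ℝ)+1)^(k+1) := by
        have h2 : 1 / ((k:ℝ)+1) ≤ Real.log (((k:ℝ)+1)/k) := by
          have := Real.one_sub_inv_le_log_of_pos (x := ((k:ℝ)+1)/k) (by positivity)
          refine le_trans (le_of_eq ?_) this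
          field_simp; ring
        have h3 : Real.exp 1 ≤ (((k:ℝ)+1)/k)^(k+1) := by
          rw [← Real.exp_log (show 0 < ((k:ℝ)+1)/k by positivity), ← Real.exp_nat_mul]
          apply Real.exp_le_exp.mpr
          calc (1:ℝ) = ((k+1:ℕ):ℝ) * (1 / ((k:ℝ)+1)) := by push_cast; field_simp
            _ ≤ _ := by gcongr
        rw [div_pow, le_div_iff₀ (by positivity)] at h3
        exact h3
      calc ((k:ℝ)+1) * k.factorial ≤ ((k:ℝ)+1) * (Real.exp 1 * k * ((k : ℝ) / Real.exp 1) ^ k) := by gcongr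
        _ = ((k:ℝ)+1) * (Real.exp 1 * (k:ℝ)^(k+1)) / Real.exp 1 ^ k := by
            rw [div_pow]; field_simp; ring
        _ ≤ ((k:ℝ)+1) * (((k:ℝ)+1)^(k+1)) / Real.exp 1 ^ k := by gcongr
        _ = _ := by rw [div_pow]; field_simp; ring
  refine (key k hk).trans ?_
  gcongr
  linarith

lemma factorial_lower (N : ℕ) : ((N : ℝ) / Real.exp 1) ^ N ≤ N.factorial := by
  have h := Real.pow_div_factorial_le_exp (N:ℝ) (by positivity) N
  rw [div_le_iff₀ (by positivity)] at h
  rw [div_pow, div_le_iff₀ (by positivity), ← Real.exp_nat_mul, mul_one, mul_comm]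
  exact h

lemma prod_factorial_le {σ : Type*} [Fintype σ] (k : σ → ℕ) (N : ℕ) (hN : 0 < N)
    (hk : ∑ a, k a = N) :
    ((∏ a, (k a).factorial : ℕ) : ℝ) ≤ (Real.exp 1 * (N + 1)) ^ Fintype.card σ * N.factorial
      * ∏ a, ((k a : ℝ) / N) ^ k a := by
  have hN' : (0:ℝ) < N := by exact_mod_cast hN
  push_cast
  calc ∏ a, ((k a).factorial : ℝ)
      ≤ ∏ a, ((Real.exp 1 * (N + 1)) * (((N:ℝ) / Real.exp 1) ^ k a * ((k a : ℝ) / N) ^ k a)) := by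
        apply Finset.prod_le_prod
        · intros; positivity
        · intro a _
          refine (factorial_upper (k a)).trans ?_
          have : k a ≤ N := by rw [← hk]; exact Finset.single_le_sum (f := k) (fun _ _ => Nat.zero_le _) (mem_univ a)
          have : (k a : ℝ) ≤ N := by exact_mod_cast this
          rw [← mul_pow]
          have h2 : (N:ℝ) / Real.exp 1 * ((k a : ℝ) / N) = (k a : ℝ) / Real.exp 1 := by field_simp
          rw [h2]
          gcongr
    _ = (Real.exp 1 * (N + 1)) ^ Fintype.card σ * ((N:ℝ) / Real.exp 1) ^ N * ∏ a, ((k a : ℝ) / N) ^ k a := by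
        rw [Finset.prod_mul_distrib, Finset.prod_mul_distrib (f := fun a => ((N:ℝ) / Real.exp 1) ^ k a),
          Finset.prod_pow_eq_pow_sum, hk, Finset.prod_const, Finset.card_univ]
        ring
    _ ≤ _ := by
        gcongr
        exact factorial_lower N

/-- number of words of a type -/
lemma card_type_le {X σ : Type*} [Fintype X] [DecidableEq X] [Fintype σ] [DecidableEq σ]
    (x : σ → ℝ) (hx : ∀ a, 0 ≤ x a) (hs : ∑ a, x a = 1) (k : σ → ℕ) :
    ((univ.filter (fun w : X → σ => ∀ a, cnt w a = k a)).card : ℝ) * ∏ a, x a ^ k a ≤ 1 := by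
  have h : (∑ w : X → σ, ∏ s, x (w s)) = 1 := by
    rw [← Fintype.prod_sum (fun (_ : X) a => x a)]; simp [hs]
  rw [← h, ← nsmul_eq_mul, ← Finset.sum_const]
  refine le_trans (le_of_eq ?_) (Finset.sum_le_sum_of_subset_of_nonneg (Finset.filter_subset (fun w : X → σ => ∀ a, cnt w a = k a) univ) ?_)
  · apply Finset.sum_congr rfl
    intro w hw
    simp at hw
    rw [prod_cnt w x]
    simp only [hw]
  · intro w _ _
    exact Finset.prod_nonneg (fun s _ => hx _)


/-- number of permutations for which `v` is in the kernel -/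
def ZZ {n p : ℕ} (d : ℕ) (v : Fin n → ZMod p) : ℕ :=
  (univ.filter (fun P : Equiv.Perm (Fin n × Fin d) => ∀ k, ∑ i, v (P (k, i)).1 = 0)).card

/-- number of coordinates different from `c` -/
def off {n p : ℕ} (c : ZMod p) (v : Fin n → ZMod p) : ℕ :=
  (univ.filter (fun k => v k ≠ c)).card

lemma sum_off {n p : ℕ} [NeZero p] (c : ZMod p) (l : ℝ) :
    ∑ v : Fin n → ZMod p, l ^ off c v = (1 + ((p:ℝ) - 1) * l) ^ n := by
  have h1 : ∀ v : Fin n → ZMod p, l ^ off c v = ∏ k, (if v k = c then (1:ℝ) else l) := by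
    intro v
    rw [Finset.prod_ite]
    simp [off]
  simp only [h1]
  rw [← Fintype.sum_pow (fun a : ZMod p => (if a = c then (1:ℝ) else l))]
  congr 1
  rw [Finset.sum_ite]
  have : (univ.filter (fun x : ZMod p => ¬ x = c)) = univ.erase c := by ext; simp
  have h2 : (univ.filter (fun x : ZMod p => x = c)).card = 1 := by
    rw [Finset.card_eq_one]; exact ⟨c, by ext; simp⟩
  rw [this]
  have hp : 1 ≤ p := NeZero.one_le
  simp [ZMod.card, Finset.card_erase_of_mem, Nat.cast_sub hp, h2]

lemma off_le {n p : ℕ} (c : ZMod p) (v : Fin n → ZMod p) : off c v ≤ n := by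
  unfold off
  exact (Finset.card_le_univ _).trans (by simp)

lemma card_off_le {n p : ℕ} [NeZero p] (c : ZMod p) (m : ℕ) (l : ℝ) (hl : 0 ≤ l) :
    ((univ.filter (fun v : Fin n → ZMod p => off c v = m)).card : ℝ) * l ^ m
      ≤ Real.exp (p * l * n) := by
  have h1 : ((univ.filter (fun v : Fin n → ZMod p => off c v = m)).card : ℝ) * l ^ m
      ≤ (1 + ((p:ℝ) - 1) * l) ^ n := by
    rw [← sum_off c l, ← nsmul_eq_mul, ← Finset.sum_const]
    refine le_trans (le_of_eq ?_) (Finset.sum_le_sum_of_subset_of_nonneg (Finset.filter_subset (fun v => off c v = m) univ) ?_)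
    · apply Finset.sum_congr rfl
      intro w hw
      simp at hw
      rw [hw]
    · intros; positivity
  refine h1.trans ?_
  rw [mul_comm _ (n:ℝ), Real.exp_nat_mul]
  have hp : (1:ℝ) ≤ p := by exact_mod_cast (NeZero.one_le : 1 ≤ p)
  apply pow_le_pow_left₀
  · have : 0 ≤ ((p:ℝ) - 1) * l := mul_nonneg (by linarith) hl
    linarith
  · have := Real.add_one_le_exp (p * l)
    nlinarith

lemma choose_lower (N k : ℕ) (hk : k ≤ N) :
    (k.factorial : ℝ) * (N - k).factorial * (N:ℝ) ^ k ≤ N.factorial * (k:ℝ) ^ k := by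
  have h1 : k.factorial * N ^ k ≤ N.descFactorial k * k ^ k := by
    rw [← Nat.descFactorial_self k, Nat.descFactorial_eq_prod_range, Nat.descFactorial_eq_prod_range]
    have e1 : N ^ k = ∏ _i ∈ range k, N := by simp
    have e2 : k ^ k = ∏ _i ∈ range k, k := by simp
    rw [e1]
    conv_rhs => rw [e2]
    rw [← Finset.prod_mul_distrib, ← Finset.prod_mul_distrib]
    apply Finset.prod_le_prod' 
    intro i hi
    simp at hi
    zify [hi.le, (hi.le.trans hk)]
    have : (k:ℤ) ≤ N := by exact_mod_cast hk
    nlinarith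
  have h2 : N.descFactorial k * (N - k).factorial = N.factorial := by
    rw [mul_comm]; exact Nat.factorial_mul_descFactorial hk
  rw [← h2]
  push_cast
  have h1' : (k.factorial : ℝ) * (N:ℝ) ^ k ≤ N.descFactorial k * (k:ℝ) ^ k := by exact_mod_cast h1
  have : (0:ℝ) ≤ (N-k).factorial := by positivity
  nlinarith

lemma sm_single {n p d : ℕ} (v : Fin n → ZMod p) (m : ℕ) (hm : 1 ≤ m)
    (hv : off 0 v = m) :
    (ZZ d v : ℝ) ≤ (n * d).factorial * (Real.sqrt ((m:ℝ)/n) ^ (m * d) * Real.exp (2 ^ d * m)) := by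
  have hmn : m ≤ n := hv ▸ off_le 0 v
  have hn0 : (0:ℝ) < n := by exact_mod_cast (hm.trans hmn)
  have hm0 : (0:ℝ) < m := by exact_mod_cast hm
  have hmn' : (m:ℝ) ≤ n := by exact_mod_cast hmn
  set z := Real.sqrt ((m:ℝ)/n) with hz
  have hz0 : 0 < z := Real.sqrt_pos.mpr (by positivity)
  have hz1 : z ≤ 1 := by
    rw [hz, Real.sqrt_le_left (by norm_num), one_pow, div_le_one hn0]; exact hmn'
  have hz2 : z ^ 2 = (m:ℝ)/n := Real.sq_sqrt (by positivity)
  let f : Fin n × Fin d → Bool := fun s => (fun k => decide (v k ≠ 0)) s.1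
  have c1 : cnt f true = m * d := by
    refine (cnt_fst (fun k => decide (v k ≠ 0)) true).trans ?_
    rw [← hv]
    simp [cnt, off]
  have c0 : cnt f false = (n - m) * d := by
    have := sum_cnt f
    simp only [Fintype.sum_bool, c1, Fintype.card_prod, Fintype.card_fin] at this
    rw [Nat.sub_mul]; omega
  have hb := pos_bound f (fun ρ => (univ.filter (fun i => ρ i = true)).card ≠ 1)
    (fun b => if b then z else 1) (by intro a; split_ifs <;> positivity)
  simp only [Fintype.prod_bool, c1, c0] at hb
  simp only [if_true, Bool.false_eq_true, if_false, one_pow, mul_one] at hb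
  have hZ : (ZZ d v : ℝ) ≤ ((univ.filter (fun P : Equiv.Perm (Fin n × Fin d) =>
        ∀ k, (univ.filter (fun i => f (P (k, i)) = true)).card ≠ 1)).card : ℝ) := by
    unfold ZZ
    norm_cast
    apply Finset.card_le_card
    intro P hP
    simp only [Finset.mem_filter, Finset.mem_univ, true_and] at hP ⊢
    intro k hk
    rw [Finset.card_eq_one] at hk
    obtain ⟨i, hi⟩ := hk
    have h1 := hP k
    have hi' : ∀ j, v (P (k, j)).1 ≠ 0 ↔ j = i := by
      intro j
      have := congrArg (fun s => j ∈ s) hi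
      simpa [f] using this
    rw [Finset.sum_eq_single i] at h1
    · exact (hi' i).mpr rfl h1
    · intro j _ hj
      by_contra h
      exact hj ((hi' j).mp h)
    · simp
  have hQ : (∑ ρ ∈ univ.filter (fun ρ : Fin d → Bool => (univ.filter (fun i => ρ i = true)).card ≠ 1),
      ∏ i, (if ρ i then z else 1)) ≤ 1 + 2 ^ d * z ^ 2 := by
    have hpt : ∀ ρ : Fin d → Bool, (∏ i, (if ρ i then z else 1)) = z ^ (univ.filter (fun i => ρ i = true)).card := by
      intro ρ
      rw [Finset.prod_ite]; simp
    calc _ ≤ ∑ ρ ∈ univ.filter (fun ρ : Fin d → Bool => (univ.filter (fun i => ρ i = true)).card ≠ 1),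
        ((if ρ = fun _ => false then 1 else 0) + z ^ 2) := by
          apply Finset.sum_le_sum
          intro ρ hρ
          simp only [Finset.mem_filter, Finset.mem_univ, true_and] at hρ
          rw [hpt]
          split_ifs with h
          · subst h; simp; positivity
          · rw [zero_add]
            apply pow_le_pow_of_le_one hz0.le hz1
            have : (univ.filter (fun i => ρ i = true)).card ≠ 0 := by
              intro h0
              rw [Finset.card_eq_zero, Finset.filter_eq_empty_iff] at h0
              apply h; funext i; simpa using h0 (mem_univ i)
            omega
      _ ≤ ∑ ρ : Fin d → Bool, ((if ρ = fun _ => false then 1 else 0) + z ^ 2) := by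
          apply Finset.sum_le_sum_of_subset_of_nonneg (Finset.filter_subset _ _)
          intro ρ _ _; split_ifs <;> positivity
      _ = _ := by
          rw [Finset.sum_add_distrib]; simp
  have hQn : (∑ ρ ∈ univ.filter (fun ρ : Fin d → Bool => (univ.filter (fun i => ρ i = true)).card ≠ 1),
      ∏ i, (if ρ i then z else 1)) ^ n ≤ Real.exp (2 ^ d * m) := by
    have : (2:ℝ)^d * m = n * (2 ^ d * z ^ 2) := by rw [hz2]; field_simp
    rw [this, Real.exp_nat_mul]
    apply pow_le_pow_left₀
    · apply Finset.sum_nonneg; intro ρ _; apply Finset.prod_nonneg; intro i _; split_ifs <;> positivity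
    · refine hQ.trans ?_
      have := Real.add_one_le_exp ((2:ℝ)^d * z^2)
      linarith
  have hch : ((m * d).factorial : ℝ) * ((n - m) * d).factorial ≤ (n * d).factorial * z ^ (2 * (m * d)) := by
    have := choose_lower (n * d) (m * d) (Nat.mul_le_mul_right d hmn)
    rw [← Nat.sub_mul] at this
    rw [pow_mul, hz2]
    rcases Nat.eq_zero_or_pos d with hd | hd
    · subst hd; simp
    have hd' : (0:ℝ) < d := by exact_mod_cast hd
    push_cast at this
    rw [mul_pow, mul_pow] at this
    rw [div_pow, mul_div_assoc', le_div_iff₀ (by positivity)]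
    have hdp : (0:ℝ) < (d:ℝ) ^ (m * d) := by positivity
    refine le_of_mul_le_mul_right ?_ hdp
    linarith
  have hfin : (ZZ d v : ℝ) * z ^ (m * d) ≤ ((n * d).factorial * (z ^ (m * d) * Real.exp (2 ^ d * m))) * z ^ (m * d) := by
    calc (ZZ d v : ℝ) * z ^ (m * d) ≤ _ := mul_le_mul_of_nonneg_right hZ (by positivity)
      _ ≤ _ := hb
      _ ≤ ((n * d).factorial * z ^ (2 * (m * d))) * Real.exp (2 ^ d * m) := by
          push_cast
          apply mul_le_mul hch hQn _ (by positivity)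
          apply pow_nonneg
          apply Finset.sum_nonneg; intro ρ _; apply Finset.prod_nonneg; intro i _; split_ifs <;> positivity
      _ = _ := by rw [two_mul, pow_add]; ring
  exact le_of_mul_le_mul_right hfin (by positivity)

lemma sm_level {n p d : ℕ} [NeZero p] (hd : 3 ≤ d) (m : ℕ) (hm : 1 ≤ m) (hmn : m ≤ n) :
    (∑ v ∈ univ.filter (fun v : Fin n → ZMod p => off 0 v = m), (ZZ d v : ℝ))
      ≤ (n * d).factorial * (Real.exp (p + 2 ^ d) * Real.sqrt ((m:ℝ)/n)) ^ m := by
  have hn0 : (0:ℝ) < n := by exact_mod_cast (hm.trans hmn)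
  have hm0 : (0:ℝ) < m := by exact_mod_cast hm
  have hmn' : (m:ℝ) ≤ n := by exact_mod_cast hmn
  have h0 : ∀ v ∈ univ.filter (fun v : Fin n → ZMod p => off 0 v = m), (ZZ d v : ℝ) ≤ (n * d).factorial * (Real.sqrt ((m:ℝ)/n) ^ (m * d) * Real.exp (2 ^ d * m)) := by
    intro v hv
    simp at hv
    exact sm_single v m hm hv
  set z := Real.sqrt ((m:ℝ)/n) with hz
  have hz0 : 0 < z := Real.sqrt_pos.mpr (by positivity)
  have hz1 : z ≤ 1 := by
    rw [hz, Real.sqrt_le_left (by norm_num), one_pow, div_le_one hn0]; exact hmn'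
  have hz2 : z ^ 2 = (m:ℝ)/n := Real.sq_sqrt (by positivity)
  refine (Finset.sum_le_sum h0).trans ?_
  rw [Finset.sum_const, nsmul_eq_mul]
  have hc := card_off_le (n := n) (p := p) 0 m (z^2) (by positivity)
  have e1 : (p:ℝ) * z^2 * n = p * m := by rw [hz2]; field_simp
  rw [e1] at hc
  have hzd : z ^ (m * d) ≤ (z^2)^m * z ^ m := by
    rw [← pow_mul, ← pow_add]
    apply pow_le_pow_of_le_one hz0.le hz1
    nlinarith
  have e2 : (Real.exp (p + 2 ^ d) * z) ^ m = Real.exp (p * m) * Real.exp (2^d * m) * z ^ m := by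
    rw [mul_pow, ← Real.exp_nat_mul, ← Real.exp_add]; ring_nf
  rw [e2]
  set c : ℝ := ((univ.filter (fun v : Fin n → ZMod p => off 0 v = m)).card : ℝ)
  calc c * ((n * d).factorial * (z ^ (m * d) * Real.exp (2 ^ d * m)))
      ≤ c * ((n * d).factorial * (((z^2)^m * z ^ m) * Real.exp (2 ^ d * m))) := by gcongr
    _ = (c * (z^2)^m) * ((n * d).factorial * (z ^ m * Real.exp (2 ^ d * m))) := by ring
    _ ≤ Real.exp (p * m) * ((n * d).factorial * (z ^ m * Real.exp (2 ^ d * m))) := by gcongr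
    _ = _ := by ring

lemma sm_total {n p d : ℕ} [NeZero p] (hd : 3 ≤ d) (δ : ℝ) (hδ : 0 < δ)
    (hδ2 : Real.exp (p + 2 ^ d) * Real.sqrt δ ≤ 1 / 4) (hn : 0 < n) :
    (∑ v ∈ univ.filter (fun v : Fin n → ZMod p => (off 0 v : ℝ) ≤ δ * n ∧ v ≠ 0), (ZZ d v : ℝ))
      ≤ (n * d).factorial * (8 * Real.exp (p + 2 ^ d) / Real.sqrt n) := by
  have hn0 : (0:ℝ) < n := by exact_mod_cast hn
  set C := Real.exp (p + 2 ^ d) with hC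
  have hC0 : 0 < C := Real.exp_pos _
  have hsn : 0 < Real.sqrt n := Real.sqrt_pos.mpr hn0
  have hsub : (∑ v ∈ univ.filter (fun v : Fin n → ZMod p => (off 0 v : ℝ) ≤ δ * n ∧ v ≠ 0), (ZZ d v : ℝ))
      ≤ ∑ m ∈ (range (n+1)).filter (fun m : ℕ => 1 ≤ m ∧ (m:ℝ) ≤ δ * n),
        ∑ v ∈ univ.filter (fun v : Fin n → ZMod p => off 0 v = m), (ZZ d v : ℝ) := by
    rw [← Finset.sum_fiberwise_of_maps_to (s := univ.filter (fun v : Fin n → ZMod p => (off 0 v : ℝ) ≤ δ * n ∧ v ≠ 0)) (t := (range (n+1)).filter (fun m : ℕ => 1 ≤ m ∧ (m:ℝ) ≤ δ * n)) (g := fun v => off 0 v)]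
    · apply Finset.sum_le_sum
      intro m _
      apply Finset.sum_le_sum_of_subset_of_nonneg
      · intro v hv; simp at hv ⊢; exact hv.2
      · intros; positivity
    · intro v hv
      simp at hv ⊢
      refine ⟨?_, ?_, hv.1⟩
      · have := off_le 0 v; omega
      · by_contra h
        apply hv.2
        have : off 0 v = 0 := by omega
        unfold off at this
        rw [Finset.card_eq_zero, Finset.filter_eq_empty_iff] at this
        funext k
        simpa using this (mem_univ k)
  refine hsub.trans ?_
  have hlev : ∀ m ∈ (range (n+1)).filter (fun m : ℕ => 1 ≤ m ∧ (m:ℝ) ≤ δ * n),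
      ∑ v ∈ univ.filter (fun v : Fin n → ZMod p => off 0 v = m), (ZZ d v : ℝ)
      ≤ (n * d).factorial * (4 * C / Real.sqrt n * (1/2)^m) := by
    intro m hm
    simp at hm
    obtain ⟨hm1, hm2, hm3⟩ := hm
    refine (sm_level hd m hm2 (by omega)).trans ?_
    gcongr
    rw [← hC]
    set z := Real.sqrt ((m:ℝ)/n) with hz
    have hz0 : 0 ≤ z := Real.sqrt_nonneg _
    have hzδ : C * z ≤ 1/4 := by
      refine le_trans ?_ hδ2
      gcongr
      rw [hz]
      apply Real.sqrt_le_sqrt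
      rw [div_le_iff₀ hn0]; exact hm3
    have hm1' : (1:ℝ) ≤ m := by exact_mod_cast hm2
    have hzm : z ≤ m / Real.sqrt n := by
      rw [hz, Real.sqrt_div (by positivity)]
      gcongr
      rw [Real.sqrt_le_left (by positivity)]
      nlinarith
    have h2m : (m:ℝ) ≤ 2 ^ m := by exact_mod_cast (Nat.lt_two_pow_self).le
    obtain ⟨j, rfl⟩ : ∃ j, m = j + 1 := ⟨m - 1, by omega⟩
    calc (C * z) ^ (j+1) = (C * z) ^ j * (C * z) := pow_succ _ _
      _ ≤ (1/4)^j * (C * (2^(j+1) / Real.sqrt n)) := by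
          gcongr
          refine hzm.trans ?_
          gcongr
      _ = _ := by
          have : (1/4:ℝ)^j = (1/2)^j * (1/2)^j := by rw [← mul_pow]; norm_num
          rw [this]
          have h3 : (2:ℝ)^j * (1/2)^j = 1 := by rw [← mul_pow]; norm_num
          rw [pow_succ, pow_succ]
          field_simp
          linear_combination 4 * h3
  refine (Finset.sum_le_sum hlev).trans ?_
  rw [← Finset.mul_sum, ← Finset.mul_sum]
  have hgeo : ∑ m ∈ (range (n+1)).filter (fun m : ℕ => 1 ≤ m ∧ (m:ℝ) ≤ δ * n), (1/2:ℝ)^m ≤ 2 := by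
    refine le_trans (Finset.sum_le_sum_of_subset_of_nonneg (Finset.filter_subset _ _) (by intros; positivity)) ?_
    exact sum_geometric_two_le _
  calc _ ≤ ((n * d).factorial:ℝ) * (4 * C / Real.sqrt n * 2) := by gcongr
    _ = _ := by ring


lemma sum_types {n : ℕ} {σ : Type*} [Fintype σ] [DecidableEq σ] (hn : 0 < n)
    (S : Finset (Fin n → σ)) (F : (Fin n → σ) → ℝ) (B : ℝ) (hB : 0 ≤ B)
    (h : ∀ v ∈ S, F v ≤ B * ∏ a, ((cnt v a : ℝ) / n) ^ cnt v a) :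
    ∑ v ∈ S, F v ≤ ((n:ℝ) + 1) ^ Fintype.card σ * B := by
  classical
  have hn0 : (0:ℝ) < n := by exact_mod_cast hn
  refine (Finset.sum_le_sum h).trans ?_
  have hmaps : ∀ v ∈ S, (fun v : Fin n → σ => fun a => cnt v a) v ∈ Fintype.piFinset (fun _ : σ => range (n+1)) := by
    intro v _
    rw [Fintype.mem_piFinset]
    intro a
    have : cnt v a ≤ n := (Finset.card_le_univ _).trans (by simp)
    simp; omega
  rw [← Finset.sum_fiberwise_of_maps_to hmaps]
  have hcard : ((Fintype.piFinset (fun _ : σ => range (n+1))).card : ℝ) = ((n:ℝ)+1) ^ Fintype.card σ := by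
    simp
  rw [← hcard, ← nsmul_eq_mul, ← Finset.sum_const]
  apply Finset.sum_le_sum
  intro k _
  by_cases hk : ∑ a, k a = n
  · have hct := card_type_le (X := Fin n) (fun a => (k a : ℝ) / n) (fun a => by positivity)
      (by rw [← Finset.sum_div, ← Nat.cast_sum, hk]; field_simp) k
    calc ∑ v ∈ S with (fun a => cnt v a) = k, B * ∏ a, ((cnt v a : ℝ) / n) ^ cnt v a
        = ∑ v ∈ S with (fun a => cnt v a) = k, B * ∏ a, ((k a : ℝ) / n) ^ k a := by
          apply Finset.sum_congr rfl
          intro v hv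
          have := (Finset.mem_filter.mp hv).2
          have h2 : ∀ a, cnt v a = k a := fun a => congrFun this a
          simp only [h2]
      _ ≤ ∑ v ∈ univ.filter (fun w : Fin n → σ => ∀ a, cnt w a = k a), B * ∏ a, ((k a : ℝ) / n) ^ k a := by
          apply Finset.sum_le_sum_of_subset_of_nonneg
          · intro v hv
            have := (Finset.mem_filter.mp hv).2
            simp only [Finset.mem_filter, Finset.mem_univ, true_and]
            exact fun a => congrFun this a
          · intros; positivity
      _ = B * (((univ.filter (fun w : Fin n → σ => ∀ a, cnt w a = k a)).card : ℝ) * ∏ a, ((k a : ℝ) / n) ^ k a) := by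
          rw [Finset.sum_const, nsmul_eq_mul]; ring
      _ ≤ B * 1 := by gcongr
      _ = B := mul_one B
  · rw [Finset.sum_eq_zero]
    · exact hB
    · intro v hv
      have := (Finset.mem_filter.mp hv).2
      exfalso; apply hk
      rw [← this, sum_cnt]; simp

/-- weighted count of zero-sum rows -/
noncomputable def Qf {p : ℕ} [NeZero p] (d : ℕ) (y : ZMod p → ℝ) : ℝ :=
  ∑ ρ ∈ univ.filter (fun ρ : Fin d → ZMod p => ∑ i, ρ i = 0), ∏ i, y (ρ i) ^ (d - 1)

lemma amgm_row {d : ℕ} (hd : 0 < d) (t : Fin d → ℝ) (ht : ∀ i, 0 ≤ t i) :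
    (∏ i, t i ^ (d - 1) ≤ ∑ i, (1 / (d:ℝ)) * ∏ j ∈ ({i}ᶜ : Finset (Fin d)), t j ^ d) ∧
    (∏ i, t i ^ (d - 1) = ∑ i, (1 / (d:ℝ)) * ∏ j ∈ ({i}ᶜ : Finset (Fin d)), t j ^ d →
      ∀ i i', ∏ j ∈ ({i}ᶜ : Finset (Fin d)), t j ^ d = ∏ j ∈ ({i'}ᶜ : Finset (Fin d)), t j ^ d) := by
  have hd0 : (d:ℝ) ≠ 0 := by exact_mod_cast hd.ne'
  set G : Fin d → ℝ := fun i => ∏ j ∈ ({i}ᶜ : Finset (Fin d)), t j ^ d with hG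
  have hG0 : ∀ i, 0 ≤ G i := fun i => Finset.prod_nonneg (fun j _ => by have := ht j; positivity)
  have hw : ∑ i : Fin d, (1 / (d:ℝ)) = 1 := by simp [hd0]
  have hgm : ∏ i, t i ^ (d - 1) = ∏ i, G i ^ (1 / (d:ℝ)) := by
    have h1 : ∀ i, G i ^ (1 / (d:ℝ)) = ∏ j ∈ ({i}ᶜ : Finset (Fin d)), t j := by
      intro i
      rw [hG]
      simp only
      rw [Finset.prod_pow, one_div, Real.pow_rpow_inv_natCast (Finset.prod_nonneg (fun j _ => ht j)) hd.ne']
    simp only [h1]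
    rw [Finset.prod_comm' (t' := univ) (s' := fun j => ({j}ᶜ : Finset (Fin d)))]
    · apply Finset.prod_congr rfl
      intro i _
      rw [Finset.prod_const, Finset.card_compl]; simp
    · intro x y; simp [eq_comm]
  rw [hgm]
  refine ⟨Real.geom_mean_le_arith_mean_weighted univ _ G (fun _ _ => by positivity) hw (fun i _ => hG0 i), ?_⟩
  intro h i i'
  have := (Real.geom_mean_eq_arith_mean_weighted_iff_of_pos univ _ G (fun _ _ => by positivity) hw (fun i _ => hG0 i)).mp h
  exact this i (mem_univ _) i' (mem_univ _)

lemma zero_sum_marginal {p d : ℕ} [NeZero p] (i : Fin d) (b : ZMod p → ℝ) (hb : ∑ a, b a = 1) :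
    ∑ ρ ∈ univ.filter (fun ρ : Fin d → ZMod p => ∑ i, ρ i = 0), ∏ j ∈ ({i}ᶜ : Finset (Fin d)), b (ρ j) = 1 := by
  obtain ⟨e, rfl⟩ : ∃ e, d = e + 1 := ⟨d - 1, by have := i.pos; omega⟩
  rw [Finset.sum_filter]
  rw [← (Fin.insertNthEquiv (fun _ => ZMod p) i).sum_comp]
  have h1 : ∀ q : ZMod p × (Fin e → ZMod p),
      ∏ j ∈ ({i}ᶜ : Finset (Fin (e+1))), b ((Fin.insertNthEquiv (fun _ => ZMod p) i) q j) = ∏ j, b (q.2 j) := by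
    intro q
    rw [← Fin.image_succAbove_univ, Finset.prod_image (fun a _ b _ h => Fin.succAbove_right_injective h)]
    simp
  simp only [h1]
  have h2 : ∀ q : ZMod p × (Fin e → ZMod p), ∑ j, (Fin.insertNthEquiv (fun _ => ZMod p) i) q j = q.1 + ∑ j, q.2 j := by
    intro q
    rw [Fin.sum_univ_succAbove _ i]; simp
  simp only [h2]
  rw [Fintype.sum_prod_type_right]
  have h3 : ∀ q : Fin e → ZMod p, ∑ x : ZMod p, (if x + ∑ j, q j = 0 then ∏ j, b (q j) else 0) = ∏ j, b (q j) := by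
    intro q
    rw [Finset.sum_eq_single (-∑ j, q j)]
    · simp
    · intro x _ hx
      rw [if_neg]
      intro h; apply hx; exact eq_neg_of_add_eq_zero_left h
    · simp
  simp only [h3]
  rw [← Fintype.sum_pow, hb, one_pow]

lemma Qf_le_one {p d : ℕ} [NeZero p] (hd : 0 < d) (y : ZMod p → ℝ) (hy : ∀ a, 0 ≤ y a)
    (hs : ∑ a, y a ^ d = 1) :
    Qf d y ≤ 1 ∧ (Qf d y = 1 → ∀ ρ : Fin d → ZMod p, ∑ i, ρ i = 0 →
      ∀ i i', ∏ j ∈ ({i}ᶜ : Finset (Fin d)), y (ρ j) ^ d = ∏ j ∈ ({i'}ᶜ : Finset (Fin d)), y (ρ j) ^ d) := by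
  have hd0 : (d:ℝ) ≠ 0 := by exact_mod_cast hd.ne'
  have hsum : ∑ ρ ∈ univ.filter (fun ρ : Fin d → ZMod p => ∑ i, ρ i = 0),
      ∑ i, (1 / (d:ℝ)) * ∏ j ∈ ({i}ᶜ : Finset (Fin d)), y (ρ j) ^ d = 1 := by
    rw [Finset.sum_comm]
    have : ∀ i : Fin d, ∑ ρ ∈ univ.filter (fun ρ : Fin d → ZMod p => ∑ i, ρ i = 0),
      (1 / (d:ℝ)) * ∏ j ∈ ({i}ᶜ : Finset (Fin d)), y (ρ j) ^ d = 1 / d := by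
      intro i
      rw [← Finset.mul_sum, zero_sum_marginal i (fun a => y a ^ d) hs, mul_one]
    simp only [this]; simp [hd0]
  have hle := fun ρ : Fin d → ZMod p => amgm_row hd (fun i => y (ρ i)) (fun i => hy _)
  constructor
  · rw [← hsum, Qf]
    exact Finset.sum_le_sum (fun ρ _ => (hle ρ).1)
  · intro h ρ hρ
    rw [← hsum, Qf, Finset.sum_eq_sum_iff_of_le (fun ρ _ => (hle ρ).1)] at h
    exact (hle ρ).2 (h ρ (by simp [hρ]))

lemma Qf_eq_one {p d : ℕ} [Fact p.Prime] (hd : 3 ≤ d) (hgcd : Nat.gcd p d = 1)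
    (y : ZMod p → ℝ) (hy : ∀ a, 0 ≤ y a) (hs : ∑ a, y a ^ d = 1) (hQ : Qf d y = 1) :
    y 0 ^ d = 1 ∨ ∀ a, y a ^ d = 1 / p := by
  have heq := (Qf_le_one (by omega) y hy hs).2 hQ
  have factA : ∀ ρ : Fin d → ZMod p, ∑ i, ρ i = 0 → ∀ i0, (∀ j, j ≠ i0 → y (ρ j) ≠ 0) →
      y (ρ i0) ≠ 0 ∧ ∀ i i', y (ρ i) = y (ρ i') := by
    intro ρ hρ i0 hne
    have hG0 : ∏ j ∈ ({i0}ᶜ : Finset (Fin d)), y (ρ j) ^ d ≠ 0 := by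
      rw [Finset.prod_ne_zero_iff]
      intro j hj
      exact pow_ne_zero _ (hne j (by simpa using hj))
    have hi0 : y (ρ i0) ≠ 0 := by
      have : Nontrivial (Fin d) := Fin.nontrivial_iff_two_le.mpr (by omega)
      obtain ⟨i, hi⟩ := exists_ne i0
      rw [heq ρ hρ i0 i, Finset.prod_ne_zero_iff] at hG0
      have := hG0 i0 (by simpa using hi.symm)
      exact fun h => this (by rw [h]; exact zero_pow (by omega))
    refine ⟨hi0, fun i i' => ?_⟩
    have hall : ∀ j, y (ρ j) ≠ 0 := fun j => if h : j = i0 then h ▸ hi0 else hne j h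
    have hp : ∀ i, y (ρ i) ^ d * ∏ j ∈ ({i}ᶜ : Finset (Fin d)), y (ρ j) ^ d = ∏ j, y (ρ j) ^ d := by
      intro i
      exact (Fintype.prod_eq_mul_prod_compl i (fun j => y (ρ j) ^ d)).symm
    have h1 := hp i
    rw [← hp i', heq ρ hρ i i'] at h1
    have hne' : ∏ j ∈ ({i'}ᶜ : Finset (Fin d)), y (ρ j) ^ d ≠ 0 := by
      rw [Finset.prod_ne_zero_iff]
      intro j _
      exact pow_ne_zero _ (hall j)
    have h2 := mul_right_cancel₀ hne' h1
    exact (pow_left_inj₀ (hy _) (hy _) (by omega)).mp h2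
  by_cases hab : ∃ a b, a ≠ b ∧ y a ≠ 0 ∧ y b ≠ 0
  · right
    obtain ⟨a, b, hne, ha, hb⟩ := hab
    obtain ⟨e, rfl⟩ : ∃ e, d = e + 3 := ⟨d - 3, by omega⟩
    have step : ∀ x c, y x ≠ 0 → y c ≠ 0 → y (-(c + x + e * a)) ≠ 0 ∧ y c = y x := by
      intro x c hx hc
      let ρ : Fin (e+3) → ZMod p := Fin.cons (-(c + x + e * a)) (Fin.cons c (Fin.cons x (fun _ => a)))
      have h := factA ρ (by
        simp only [ρ]
        rw [Fin.sum_cons, Fin.sum_cons, Fin.sum_cons]; simp; ring) 0 (by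
        intro j
        refine Fin.cases ?_ ?_ j
        · simp
        · intro j _
          simp only [ρ, Fin.cons_succ]
          refine Fin.cases ?_ ?_ j
          · simpa using hc
          · intro j
            simp only [Fin.cons_succ]
            refine Fin.cases ?_ ?_ j
            · simpa using hx
            · intro j; simpa using ha)
      refine ⟨by simpa [ρ] using h.1, ?_⟩
      have h2 := h.2 (Fin.succ 0) (Fin.succ (Fin.succ 0))
      simpa only [ρ, Fin.cons_succ, Fin.cons_zero] using h2
    have shift : ∀ c, y c ≠ 0 → y (c + (a - b)) ≠ 0 := by
      intro c hc
      have h1 := (step a c ha hc).1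
      have h2 := (step b _ hb h1).1
      convert h2 using 2
      ring
    have shiftn : ∀ m : ℕ, y (a + m * (a - b)) ≠ 0 := by
      intro m
      induction m with
      | zero => simpa using ha
      | succ m ih => convert shift _ ih using 2; push_cast; ring
    have hall : ∀ c, y c ≠ 0 := by
      intro c
      have := shiftn ((c - a) / (a - b)).val
      rw [ZMod.natCast_zmod_val, div_mul_cancel₀ _ (sub_ne_zero.mpr hne)] at this
      simpa using this
    have hconst : ∀ c, y c = y a := fun c => (step a c ha (hall c)).2
    have hp0 : (p:ℝ) ≠ 0 := by exact_mod_cast (Fact.out : p.Prime).ne_zero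
    intro c
    rw [hconst c]
    simp only [hconst] at hs
    rw [Finset.sum_const, Finset.card_univ, ZMod.card, nsmul_eq_mul] at hs
    field_simp; linarith
  · left
    push Not at hab
    obtain ⟨a, ha⟩ : ∃ a, y a ≠ 0 := by
      by_contra h
      push Not at h
      simp only [h, zero_pow (show d ≠ 0 by omega)] at hs
      simp at hs
    have hz : ∀ c, c ≠ a → y c = 0 := by
      intro c hc
      by_contra h
      exact ha (hab c a hc h)
    have ha1 : y a ^ d = 1 := by
      rw [Finset.sum_eq_single a] at hs
      · exact hs
      · intro c _ hc; rw [hz c hc]; exact zero_pow (by omega)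
      · simp
    by_cases ha0 : a = 0
    · rw [← ha0]; exact ha1
    · exfalso
      have : Qf d y = 0 := by
        unfold Qf
        apply Finset.sum_eq_zero
        intro ρ hρ
        simp only [Finset.mem_filter, Finset.mem_univ, true_and] at hρ
        by_cases hall : ∀ i, ρ i = a
        · simp only [hall] at hρ
          rw [Finset.sum_const, Finset.card_univ, Fintype.card_fin, nsmul_eq_mul] at hρ
          rcases mul_eq_zero.mp hρ with h | h
          · rw [ZMod.natCast_eq_zero_iff] at h
            have := Nat.gcd_eq_left h
            rw [hgcd] at this
            exact absurd this.symm (Fact.out : p.Prime).ne_one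
          · exact absurd h ha0
        · push Not at hall
          obtain ⟨i, hi⟩ := hall
          apply Finset.prod_eq_zero (mem_univ i)
          rw [hz _ hi]; exact zero_pow (by omega)
      rw [this] at hQ; norm_num at hQ

lemma Qf_gap {p d : ℕ} [Fact p.Prime] (hd : 3 ≤ d) (hgcd : Nat.gcd p d = 1)
    (δ t : ℝ) (hδ : 0 < δ) (ht : 0 < t) :
    ∃ q : ℝ, 0 ≤ q ∧ q < 1 ∧ ∀ y : ZMod p → ℝ, (∀ a, 0 ≤ y a) → ∑ a, y a ^ d = 1 →
      y 0 ^ d ≤ 1 - δ → (∃ a, t ≤ |y a ^ d - 1 / p|) → Qf d y ≤ q := by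
  let D : Set (ZMod p → ℝ) := {y | (∀ a, 0 ≤ y a) ∧ ∑ a, y a ^ d = 1 ∧ y 0 ^ d ≤ 1 - δ ∧
    (∃ a, t ≤ |y a ^ d - 1 / p|)}
  have hclosed : IsClosed D := by
    apply IsClosed.and
    · have : {y : ZMod p → ℝ | ∀ a, 0 ≤ y a} = ⋂ a, {y : ZMod p → ℝ | 0 ≤ y a} := by
        ext; simp
      rw [this]
      exact isClosed_iInter (fun a => isClosed_le continuous_const (by fun_prop))
    apply IsClosed.and
    · exact isClosed_eq (by fun_prop) continuous_const
    apply IsClosed.and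
    · exact isClosed_le (by fun_prop) continuous_const
    · have : {y : ZMod p → ℝ | ∃ a, t ≤ |y a ^ d - 1 / p|} = ⋃ a, {y : ZMod p → ℝ | t ≤ |y a ^ d - 1 / p|} := by
        ext; simp
      rw [this]
      exact isClosed_iUnion_of_finite (fun a => isClosed_le continuous_const (by fun_prop))
  have hsub : D ⊆ Set.Icc 0 1 := by
    intro y hy
    refine ⟨fun a => hy.1 a, fun a => ?_⟩
    have h1 : y a ^ d ≤ 1 := by
      rw [← hy.2.1]
      exact Finset.single_le_sum (f := fun a => y a ^ d) (fun i _ => pow_nonneg (hy.1 i) d) (mem_univ a)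
    exact (pow_le_one_iff_of_nonneg (hy.1 a) (by omega)).mp h1
  have hcomp : IsCompact D := isCompact_Icc.of_isClosed_subset hclosed hsub
  have hcont : Continuous (fun y : ZMod p → ℝ => Qf d y) := by
    unfold Qf; fun_prop
  rcases Set.eq_empty_or_nonempty D with hD | hD
  · refine ⟨0, le_rfl, by norm_num, fun y h1 h2 h3 h4 => ?_⟩
    have : y ∈ D := ⟨h1, h2, h3, h4⟩
    rw [hD] at this; exact absurd this (by simp)
  · obtain ⟨y0, hy0, hmax⟩ := hcomp.exists_isMaxOn hD hcont.continuousOn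
    refine ⟨Qf d y0, ?_, ?_, fun y h1 h2 h3 h4 => hmax ⟨h1, h2, h3, h4⟩⟩
    · unfold Qf
      exact Finset.sum_nonneg (fun ρ _ => Finset.prod_nonneg (fun i _ => pow_nonneg (hy0.1 _) _))
    · obtain ⟨h1, h2, h3, a, h4⟩ := hy0
      refine lt_of_le_of_ne (Qf_le_one (by omega) y0 h1 h2).1 (fun h => ?_)
      rcases Qf_eq_one hd hgcd y0 h1 h2 h with h5 | h5
      · linarith
      · rw [h5 a] at h4; simp at h4; linarith

/-- vectors whose type is within `t` of uniform -/
def nearU {n p : ℕ} (t : ℝ) (v : Fin n → ZMod p) : Prop :=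
  ∀ a : ZMod p, |(cnt v a : ℝ) / n - 1 / p| ≤ t

lemma cnt_add_off {n p : ℕ} (c : ZMod p) (v : Fin n → ZMod p) : cnt v c + off c v = n := by
  unfold cnt off
  rw [Finset.card_filter_add_card_filter_not]; simp

lemma mid_single {n p d : ℕ} [NeZero p] (hn : 0 < n) (hd : 0 < d) (v : Fin n → ZMod p) (y : ZMod p → ℝ)
    (hy : ∀ a, 0 ≤ y a) (hyd : ∀ a, y a ^ d = (cnt v a : ℝ) / n) :
    (ZZ d v : ℝ) ≤ ((Real.exp 1 * ((n * d : ℕ) + 1)) ^ p * (n * d).factorial * Qf d y ^ n)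
      * ∏ a, ((cnt v a : ℝ) / n) ^ cnt v a := by
  have hn0 : (0:ℝ) < n := by exact_mod_cast hn
  have hd0 : (0:ℝ) < d := by exact_mod_cast hd
  have hb := pos_bound (fun s : Fin n × Fin d => v s.1) (fun ρ => ∑ i, ρ i = 0)
    (fun a => y a ^ (d - 1)) (fun a => pow_nonneg (hy a) _)
  have hsum : ∑ a, cnt (fun s : Fin n × Fin d => v s.1) a = n * d := by rw [sum_cnt]; simp
  have hf := prod_factorial_le (fun a => cnt (fun s : Fin n × Fin d => v s.1) a) (n * d) (by positivity) hsum
  simp only [cnt_fst] at hb hf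
  have hQ0 : 0 ≤ Qf d y := by
    unfold Qf
    exact Finset.sum_nonneg (fun ρ _ => Finset.prod_nonneg (fun i _ => pow_nonneg (hy _) _))
  set A : ℝ := ∏ a, ((cnt v a : ℝ) / n) ^ cnt v a with hA
  have hA0 : 0 < A := by
    apply Finset.prod_pos
    intro a _
    rcases Nat.eq_zero_or_pos (cnt v a) with h | h
    · rw [h]; simp
    · have : (0:ℝ) < cnt v a := by exact_mod_cast h
      positivity
  have e1 : ∏ a, (y a ^ (d - 1)) ^ (cnt v a * d) = A ^ (d - 1) := by
    rw [hA, ← Finset.prod_pow]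
    apply Finset.prod_congr rfl
    intro a _
    rw [← hyd a, ← pow_mul, ← pow_mul, ← pow_mul]; ring_nf
  have e2 : ∏ a, (((cnt v a * d : ℕ) : ℝ) / ((n * d : ℕ):ℝ)) ^ (cnt v a * d) = A ^ (d - 1) * A := by
    rw [← pow_succ, Nat.sub_add_cancel hd, hA, ← Finset.prod_pow]
    apply Finset.prod_congr rfl
    intro a _
    rw [pow_mul]; congr 2; push_cast; field_simp
  rw [e1] at hb
  rw [e2, ZMod.card] at hf
  have hb' : (ZZ d v : ℝ) * A ^ (d-1) ≤ ((∏ a, (cnt v a * d).factorial : ℕ) : ℝ) * Qf d y ^ n := hb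
  have hfin : (ZZ d v : ℝ) * A ^ (d-1) ≤ (((Real.exp 1 * ((n * d : ℕ) + 1)) ^ p * (n * d).factorial * Qf d y ^ n) * A) * A ^ (d-1) := by
    refine hb'.trans ?_
    calc _ ≤ ((Real.exp 1 * ((n * d : ℕ) + 1)) ^ p * (n * d).factorial * (A ^ (d-1) * A)) * Qf d y ^ n := by gcongr
      _ = _ := by ring
  exact le_of_mul_le_mul_right hfin (by positivity)

open Classical in
lemma mid_total {p d : ℕ} [Fact p.Prime] (hd : 3 ≤ d) (hgcd : Nat.gcd p d = 1)
    (δ t : ℝ) (hδ : 0 < δ) (ht : 0 < t) :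
    ∃ q : ℝ, 0 ≤ q ∧ q < 1 ∧ ∀ n : ℕ, 0 < n →
      (∑ v ∈ univ.filter (fun v : Fin n → ZMod p => ¬ ((off 0 v : ℝ) ≤ δ * n) ∧ ¬ nearU t v), (ZZ d v : ℝ))
      ≤ (n * d).factorial * (((n:ℝ) + 1) ^ p * (Real.exp 1 * ((n * d : ℕ) + 1)) ^ p * q ^ n) := by
  obtain ⟨q, hq0, hq1, hq⟩ := Qf_gap hd hgcd δ t hδ ht
  refine ⟨q, hq0, hq1, fun n hn => ?_⟩
  have hn0 : (0:ℝ) < n := by exact_mod_cast hn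
  have := sum_types hn (univ.filter (fun v : Fin n → ZMod p => ¬ ((off 0 v : ℝ) ≤ δ * n) ∧ ¬ nearU t v))
    (fun v => (ZZ d v : ℝ)) ((Real.exp 1 * ((n * d : ℕ) + 1)) ^ p * (n * d).factorial * q ^ n) (by positivity) ?_
  · refine this.trans (le_of_eq ?_)
    rw [ZMod.card]; ring
  · intro v hv
    simp only [Finset.mem_filter, Finset.mem_univ, true_and] at hv
    obtain ⟨hv1, hv2⟩ := hv
    have hd0 : d ≠ 0 := by omega
    let y : ZMod p → ℝ := fun a => ((cnt v a : ℝ) / n) ^ ((d:ℝ)⁻¹)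
    have hy : ∀ a, 0 ≤ y a := fun a => Real.rpow_nonneg (by positivity) _
    have hyd : ∀ a, y a ^ d = (cnt v a : ℝ) / n := fun a => Real.rpow_inv_natCast_pow (by positivity) hd0
    refine (mid_single hn (by omega) v y hy hyd).trans ?_
    have hQ : Qf d y ≤ q := by
      apply hq y hy
      · simp only [hyd]
        rw [← Finset.sum_div, ← Nat.cast_sum, sum_cnt, Fintype.card_fin, div_self hn0.ne']
      · rw [hyd]
        have h1 : (cnt v 0 : ℝ) + off 0 v = n := by exact_mod_cast cnt_add_off 0 v
        push Not at hv1
        rw [div_le_iff₀ hn0]; linarith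
      · unfold nearU at hv2
        push Not at hv2
        obtain ⟨a, ha⟩ := hv2
        exact ⟨a, by rw [hyd]; exact ha.le⟩
    have hQ0 : 0 ≤ Qf d y := by
      unfold Qf
      exact Finset.sum_nonneg (fun ρ _ => Finset.prod_nonneg (fun i _ => pow_nonneg (hy _) _))
    gcongr


lemma torus_coef {X σ : Type*} [Fintype X] [DecidableEq X] [Fintype σ] [DecidableEq σ]
    (f : X → σ) (h : X → σ → ℂ) (B : ℝ)
    (hB : ∀ θ : σ → ℂ, (∀ a, ‖θ a‖ = 1) → ∏ s, ‖∑ a, θ a * h s a‖ ≤ B) :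
    ‖∑ w ∈ univ.filter (fun w : X → σ => ∀ a, cnt w a = cnt f a), ∏ s, h s (w s)‖ ≤ B := by
  set M := Fintype.card X + 1 with hM
  have : NeZero M := ⟨by omega⟩
  let ψ : AddChar (ZMod M) ℂ := ZMod.stdAddChar
  have hprim : ψ.IsPrimitive := ZMod.isPrimitive_stdAddChar M
  have hcnt : ∀ w : X → σ, ∀ a, cnt w a < M := fun w a => by
    have : cnt w a ≤ Fintype.card X := Finset.card_le_univ _
    omega
  have key : ∀ w : X → σ, (∑ τ : σ → ZMod M, (∏ a, ψ (-(τ a * (cnt f a : ZMod M)))) * ∏ s, ψ (τ (w s)))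
      = if (∀ a, cnt w a = cnt f a) then (M:ℂ) ^ Fintype.card σ else 0 := by
    intro w
    have h1 : ∀ τ : σ → ZMod M, (∏ a, ψ (-(τ a * (cnt f a : ZMod M)))) * ∏ s, ψ (τ (w s))
        = ∏ a, ψ (τ a * ((cnt w a : ZMod M) - cnt f a)) := by
      intro τ
      rw [prod_cnt w (fun a => ψ (τ a)), ← Finset.prod_mul_distrib]
      apply Finset.prod_congr rfl
      intro a _
      rw [← AddChar.map_nsmul_eq_pow, ← AddChar.map_add_eq_mul]
      congr 1
      rw [nsmul_eq_mul]; ring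
    simp only [h1]
    rw [← Fintype.prod_sum (fun a (t : ZMod M) => ψ (t * ((cnt w a : ZMod M) - cnt f a)))]
    simp only [AddChar.sum_mulShift _ hprim]
    split_ifs with hw
    · rw [Finset.prod_congr rfl (g := fun _ => (M:ℂ))]
      · simp
      · intro a _
        rw [hw a]; simp
    · push Not at hw
      obtain ⟨a, ha⟩ := hw
      apply Finset.prod_eq_zero (mem_univ a)
      rw [if_neg]; · simp
      rw [sub_eq_zero]
      intro h
      apply ha
      have := (ZMod.natCast_eq_natCast_iff' _ _ _).mp h
      rwa [Nat.mod_eq_of_lt (hcnt w a), Nat.mod_eq_of_lt (hcnt f a)] at this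
  have hM0 : (0:ℝ) < (M:ℝ) ^ Fintype.card σ := by positivity
  have e1 : (M:ℂ) ^ Fintype.card σ * ∑ w ∈ univ.filter (fun w : X → σ => ∀ a, cnt w a = cnt f a), ∏ s, h s (w s)
      = ∑ τ : σ → ZMod M, (∏ a, ψ (-(τ a * (cnt f a : ZMod M)))) * ∏ s, ∑ a, ψ (τ a) * h s a := by
    have h2 : ∀ τ : σ → ZMod M, ∏ s, ∑ a, ψ (τ a) * h s a = ∑ w : X → σ, (∏ s, ψ (τ (w s))) * ∏ s, h s (w s) := by
      intro τ
      rw [Fintype.prod_sum (fun s a => ψ (τ a) * h s a)]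
      simp only [Finset.prod_mul_distrib]
    simp only [h2, Finset.mul_sum]
    rw [Finset.sum_comm, Finset.sum_filter]
    apply Finset.sum_congr rfl
    intro w _
    simp only [← mul_assoc]
    rw [← Finset.sum_mul, key w]
    split_ifs <;> simp
  have e2 := congrArg norm e1
  rw [norm_mul, norm_pow, Complex.norm_natCast] at e2
  have e3 : ‖∑ τ : σ → ZMod M, (∏ a, ψ (-(τ a * (cnt f a : ZMod M)))) * ∏ s, ∑ a, ψ (τ a) * h s a‖
      ≤ (M:ℝ) ^ Fintype.card σ * B := by
    refine (norm_sum_le _ _).trans ?_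
    calc _ ≤ ∑ τ : σ → ZMod M, B := by
          apply Finset.sum_le_sum
          intro τ _
          rw [norm_mul, norm_prod, norm_prod]
          simp only [AddChar.norm_apply, Finset.prod_const_one, one_mul]
          exact hB (fun a => ψ (τ a)) (fun a => AddChar.norm_apply ψ _)
      _ = _ := by simp [ZMod.card]
  rw [← e2] at e3
  exact le_of_mul_le_mul_left e3 hM0

/-- unnormalized bilinear character sum -/
noncomputable def GG {n p : ℕ} [NeZero p] (d : ℕ) (v ξ : Fin n → ZMod p) : ℂ :=
  ∑ P : Equiv.Perm (Fin n × Fin d), ∏ s, (ZMod.stdAddChar (ξ s.1 * v (P s).1) : ℂ)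

lemma GG_symm {n p : ℕ} [NeZero p] (d : ℕ) (v ξ : Fin n → ZMod p) : GG d v ξ = GG d ξ v := by
  unfold GG
  rw [← Equiv.sum_comp (Equiv.inv (Equiv.Perm (Fin n × Fin d)))]
  apply Finset.sum_congr rfl
  intro P _
  rw [← Equiv.prod_comp P]
  apply Finset.prod_congr rfl
  intro s _
  simp [mul_comm]

lemma stdAddChar_sum {p : ℕ} [NeZero p] {ι : Type*} (s : Finset ι) (f : ι → ZMod p) :
    (ZMod.stdAddChar (∑ i ∈ s, f i) : ℂ) = ∏ i ∈ s, ZMod.stdAddChar (f i) := by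
  classical
  induction s using Finset.induction_on with
  | empty => simp
  | insert a s ha ih => rw [Finset.sum_insert ha, Finset.prod_insert ha, AddChar.map_add_eq_mul, ih]

lemma GG_sum {n p : ℕ} [NeZero p] (d : ℕ) (v : Fin n → ZMod p) :
    ∑ ξ, GG d v ξ = (p:ℂ) ^ n * ZZ d v := by
  unfold GG
  rw [Finset.sum_comm]
  have h1 : ∀ P : Equiv.Perm (Fin n × Fin d),
      ∑ ξ : Fin n → ZMod p, ∏ s, (ZMod.stdAddChar (ξ s.1 * v (P s).1) : ℂ)
      = if (∀ k, ∑ i, v (P (k, i)).1 = 0) then (p:ℂ) ^ n else 0 := by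
    intro P
    have h2 : ∀ ξ : Fin n → ZMod p, ∏ s : Fin n × Fin d, (ZMod.stdAddChar (ξ s.1 * v (P s).1) : ℂ)
        = ∏ k, ZMod.stdAddChar (ξ k * ∑ i, v (P (k, i)).1) := by
      intro ξ
      rw [Fintype.prod_prod_type]
      apply Finset.prod_congr rfl
      intro k _
      rw [Finset.mul_sum, stdAddChar_sum]
    simp only [h2]
    rw [← Fintype.prod_sum (fun k (t : ZMod p) => (ZMod.stdAddChar (t * ∑ i, v (P (k, i)).1) : ℂ))]
    simp only [AddChar.sum_mulShift _ (ZMod.isPrimitive_stdAddChar p)]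
    split_ifs with hw
    · rw [Finset.prod_congr rfl (g := fun _ => (p:ℂ))]
      · simp
      · intro a _
        rw [hw a]; simp
    · push Not at hw
      obtain ⟨k, hk⟩ := hw
      apply Finset.prod_eq_zero (mem_univ k)
      rw [if_neg hk]; simp
  simp only [h1]
  rw [← Finset.sum_filter, Finset.sum_const, nsmul_eq_mul, mul_comm]
  rfl

lemma GG_trivial {n p : ℕ} [NeZero p] (d : ℕ) (v ξ : Fin n → ZMod p) :
    ‖GG d v ξ‖ ≤ (n * d).factorial := by
  unfold GG
  refine (norm_sum_le _ _).trans ?_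
  simp only [norm_prod, AddChar.norm_apply, Finset.prod_const_one]
  simp [Fintype.card_perm]

/-- Fourier transform at radius `α` and phases `θ` -/
noncomputable def FF {p : ℕ} [NeZero p] (α : ZMod p → ℝ) (θ : ZMod p → ℂ) (b : ZMod p) : ℝ :=
  ‖∑ a, θ a * ((α a : ℂ) * ZMod.stdAddChar (b * a))‖

lemma FF_le_one {p : ℕ} [NeZero p] (α : ZMod p → ℝ) (hα : ∀ a, 0 ≤ α a) (hs : ∑ a, α a = 1)
    (θ : ZMod p → ℂ) (hθ : ∀ a, ‖θ a‖ = 1) (b : ZMod p) : FF α θ b ≤ 1 := by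
  unfold FF
  refine (norm_sum_le _ _).trans ?_
  rw [← hs]
  apply Finset.sum_le_sum
  intro a _
  rw [norm_mul, norm_mul, hθ, AddChar.norm_apply, Complex.norm_real, Real.norm_of_nonneg (hα a)]
  simp

lemma FF_plancherel {p : ℕ} [NeZero p] (α : ZMod p → ℝ)
    (θ : ZMod p → ℂ) (hθ : ∀ a, ‖θ a‖ = 1) : ∑ b, FF α θ b ^ 2 = p * ∑ a, α a ^ 2 := by
  have key : ((∑ b, FF α θ b ^ 2 : ℝ) : ℂ) = ((p * ∑ a, α a ^ 2 : ℝ) : ℂ) := by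
    push_cast
    have h1 : ∀ b, ((FF α θ b : ℂ)) ^ 2 = ∑ a, ∑ a', (θ a * (α a : ℂ)) * (starRingEnd ℂ (θ a') * (α a' : ℂ))
        * ZMod.stdAddChar (b * (a - a')) := by
      intro b
      unfold FF
      rw [← Complex.mul_conj', map_sum, Finset.sum_mul_sum]
      apply Finset.sum_congr rfl
      intro a _
      apply Finset.sum_congr rfl
      intro a' _
      rw [map_mul (starRingEnd ℂ), map_mul (starRingEnd ℂ), ← AddChar.map_neg_eq_conj, Complex.conj_ofReal]
      have : b * (a - a') = b * a + -(b * a') := by ring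
      rw [this, AddChar.map_add_eq_mul]
      ring
    simp only [h1]
    rw [Finset.sum_comm]
    rw [Finset.mul_sum]
    apply Finset.sum_congr rfl
    intro a _
    rw [Finset.sum_comm]
    simp only [← Finset.mul_sum]
    simp only [AddChar.sum_mulShift _ (ZMod.isPrimitive_stdAddChar p)]
    rw [Finset.sum_eq_single a]
    · simp only [sub_self, if_true]
      have : θ a * starRingEnd ℂ (θ a) = 1 := by
        rw [Complex.mul_conj', hθ]; simp
      rw [ZMod.card]
      linear_combination (α a : ℂ) ^ 2 * p * this
    · intro a' _ ha'
      rw [if_neg (sub_ne_zero.mpr (Ne.symm ha'))]; simp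
    · simp
  exact_mod_cast key

lemma type_pos {n : ℕ} {σ : Type*} [Fintype σ] [DecidableEq σ] (hn : 0 < n) (v : Fin n → σ) :
    0 < ∏ a, ((cnt v a : ℝ) / n) ^ cnt v a := by
  have hn0 : (0:ℝ) < n := by exact_mod_cast hn
  apply Finset.prod_pos
  intro a _
  rcases Nat.eq_zero_or_pos (cnt v a) with h | h
  · rw [h]; simp
  · have : (0:ℝ) < cnt v a := by exact_mod_cast h
    positivity

lemma GG_bound {n p d : ℕ} [NeZero p] (hn : 0 < n) (hd : 0 < d) (v ξ : Fin n → ZMod p) (Y : ℝ)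
    (hY : ∀ θ : ZMod p → ℂ, (∀ a, ‖θ a‖ = 1) →
      ∏ k, FF (fun a => (cnt v a : ℝ) / n) θ (ξ k) ≤ Y) :
    ‖GG d v ξ‖ ≤ (Real.exp 1 * ((n * d : ℕ) + 1)) ^ p * (n * d).factorial * Y ^ d := by
  have hn0 : (0:ℝ) < n := by exact_mod_cast hn
  have hd0 : (0:ℝ) < d := by exact_mod_cast hd
  set A : ℝ := ∏ a, ((cnt v a : ℝ) / n) ^ cnt v a with hA
  have hA0 : 0 < A := type_pos hn v
  let α : ZMod p → ℝ := fun a => (cnt v a : ℝ) / n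
  let f : Fin n × Fin d → ZMod p := fun s => v s.1
  have hsum : ∑ a, cnt f a = n * d := by rw [sum_cnt]; simp
  have hcf : ∀ a, cnt f a = cnt v a * d := fun a => cnt_fst v a
  have hf := prod_factorial_le (fun a => cnt f a) (n * d) (by positivity) hsum
  simp only [hcf] at hf
  have e2 : ∏ a, (((cnt v a * d : ℕ) : ℝ) / ((n * d : ℕ):ℝ)) ^ (cnt v a * d) = A ^ d := by
    rw [hA, ← Finset.prod_pow]
    apply Finset.prod_congr rfl
    intro a _
    rw [pow_mul]; congr 2; push_cast; field_simp
  rw [e2, ZMod.card] at hf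
  have hps := perm_sum (R := ℂ) f (fun w => ∏ s, (ZMod.stdAddChar (ξ s.1 * w s) : ℂ))
  have hGG : GG d v ξ = ((∏ a, (cnt v a * d).factorial : ℕ) : ℂ) *
      ∑ w ∈ univ.filter (fun w : Fin n × Fin d → ZMod p => ∀ a, cnt w a = cnt f a),
        ∏ s, (ZMod.stdAddChar (ξ s.1 * w s) : ℂ) := by
    simp only [← hcf]
    rw [← hps]; rfl
  have ht := torus_coef f (fun s a => (α a : ℂ) * ZMod.stdAddChar (ξ s.1 * a)) (Y ^ d) (by
    intro θ hθ
    rw [Fintype.prod_prod_type]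
    have : ∀ k : Fin n, ∏ _i : Fin d, ‖∑ a, θ a * ((α a : ℂ) * ZMod.stdAddChar (ξ k * a))‖ = FF α θ (ξ k) ^ d := by
      intro k; simp [FF]
    simp only [this]
    rw [Finset.prod_pow]
    apply pow_le_pow_left₀ _ (hY θ hθ)
    exact Finset.prod_nonneg (fun k _ => norm_nonneg _))
  have e3 : ∑ w ∈ univ.filter (fun w : Fin n × Fin d → ZMod p => ∀ a, cnt w a = cnt f a),
      ∏ s, ((α (w s) : ℂ) * ZMod.stdAddChar (ξ s.1 * w s))
      = ((A ^ d : ℝ) : ℂ) * ∑ w ∈ univ.filter (fun w : Fin n × Fin d → ZMod p => ∀ a, cnt w a = cnt f a),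
        ∏ s, (ZMod.stdAddChar (ξ s.1 * w s) : ℂ) := by
    rw [Finset.mul_sum]
    apply Finset.sum_congr rfl
    intro w hw
    simp only [Finset.mem_filter, Finset.mem_univ, true_and] at hw
    rw [Finset.prod_mul_distrib, prod_cnt w (fun a => (α a : ℂ))]
    congr 1
    simp only [hw, hcf]
    rw [hA, ← Finset.prod_pow]
    push_cast
    apply Finset.prod_congr rfl
    intro a _
    simp only [α]
    push_cast
    rw [pow_mul]
  rw [e3, norm_mul, Complex.norm_real, Real.norm_of_nonneg (by positivity)] at ht
  rw [hGG, norm_mul, Complex.norm_natCast]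
  set W := ‖∑ w ∈ univ.filter (fun w : Fin n × Fin d → ZMod p => ∀ a, cnt w a = cnt f a),
        ∏ s, (ZMod.stdAddChar (ξ s.1 * w s) : ℂ)‖
  have hW : 0 ≤ W := norm_nonneg _
  calc _ ≤ ((Real.exp 1 * ((n * d : ℕ) + 1)) ^ p * (n * d).factorial * A ^ d) * W := by gcongr
    _ = (Real.exp 1 * ((n * d : ℕ) + 1)) ^ p * (n * d).factorial * (A ^ d * W) := by ring
    _ ≤ _ := by gcongr


lemma prod_le_of_sum_le {n : ℕ} (z : Fin n → ℝ) (hz : ∀ k, 0 ≤ z k) (S : ℝ) (hS : 0 < S)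
    (h : ∑ k, z k ≤ n * S) : ∏ k, z k ≤ S ^ n := by
  have h1 : ∏ k, (z k / S) ≤ 1 := by
    calc ∏ k, (z k / S) ≤ ∏ k, Real.exp (z k / S - 1) := by
          apply Finset.prod_le_prod
          · intro k _; exact div_nonneg (hz k) hS.le
          · intro k _
            have := Real.add_one_le_exp (z k / S - 1)
            linarith
      _ = Real.exp (∑ k, (z k / S - 1)) := by rw [Real.exp_sum]
      _ ≤ 1 := by
          rw [Real.exp_le_one_iff, Finset.sum_sub_distrib, ← Finset.sum_div]
          simp only [Finset.sum_const, Finset.card_univ, Fintype.card_fin, nsmul_eq_mul, mul_one]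
          rw [sub_nonpos, div_le_iff₀ hS]
          exact h
  rw [Finset.prod_div_distrib] at h1
  simp only [Finset.prod_const, Finset.card_univ, Fintype.card_fin] at h1
  rwa [div_le_one (by positivity)] at h1

lemma sum_cntR {n : ℕ} {σ : Type*} [Fintype σ] [DecidableEq σ] (f : Fin n → σ) (g : σ → ℝ) :
    ∑ k, g (f k) = ∑ a, (cnt f a : ℝ) * g a := by
  rw [← Finset.sum_fiberwise (s := univ) (g := f)]
  apply Finset.sum_congr rfl
  intro a _
  rw [Finset.sum_congr rfl (g := fun _ => g a)]
  · rw [Finset.sum_const, nsmul_eq_mul]; rfl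
  · intro x hx
    simp only [Finset.mem_filter] at hx
    rw [hx.2]

/-- type bound -/
lemma type_bound {n : ℕ} {σ : Type*} [Fintype σ] [DecidableEq σ] (hn : 0 < n) (F : σ → ℝ) (T : ℝ) (hT : 0 < T)
    (hF : ∑ b, F b ^ 2 ≤ T) (ξ : Fin n → σ) :
    (∏ k, F (ξ k)) ^ 2 ≤ T ^ n * ∏ b, ((cnt ξ b : ℝ) / n) ^ cnt ξ b := by
  have hn0 : (0:ℝ) < n := by exact_mod_cast hn
  have h1 := prod_le_of_sum_le (fun k => F (ξ k) ^ 2 / ((cnt ξ (ξ k) : ℝ) / n)) (fun k => by positivity) T hT (by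
    rw [sum_cntR ξ (fun b => F b ^ 2 / ((cnt ξ b : ℝ) / n))]
    calc _ ≤ ∑ b, n * F b ^ 2 := by
          apply Finset.sum_le_sum
          intro b _
          rcases Nat.eq_zero_or_pos (cnt ξ b) with h | h
          · rw [h]; simp; positivity
          · have : (0:ℝ) < cnt ξ b := by exact_mod_cast h
            apply le_of_eq; field_simp
      _ ≤ _ := by rw [← Finset.mul_sum]; gcongr)
  rw [Finset.prod_div_distrib, prod_cnt ξ (fun b => (cnt ξ b : ℝ) / n)] at h1
  rw [div_le_iff₀ (type_pos hn ξ), Finset.prod_pow] at h1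
  exact h1

lemma near_const_bound {n p : ℕ} [NeZero p] (hn : 0 < n) (F : ZMod p → ℝ) (hF0 : ∀ b, 0 ≤ F b)
    (c : ZMod p) (e δ : ℝ) (he : 0 < e) (hδ : 0 ≤ δ) (hδ1 : δ < 1)
    (hF1 : ∀ b, F b ≤ 1) (hF : ∑ b, F b ^ 2 ≤ 1 + e) (hδe : δ ≤ e * (1 - δ))
    (ξ : Fin n → ZMod p) (hξ : (off c ξ : ℝ) ≤ δ * n) :
    (∏ k, F (ξ k)) ^ 2 ≤ e ^ off c ξ := by
  have hn0 : (0:ℝ) < n := by exact_mod_cast hn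
  let w : ZMod p → ℝ := fun b => if b = c then 1 else e
  have hw : ∀ b, 0 < w b := fun b => by simp only [w]; split_ifs <;> linarith
  have hcc : (cnt ξ c : ℝ) + off c ξ = n := by exact_mod_cast cnt_add_off c ξ
  have hother : ∀ b, b ≠ c → (cnt ξ b : ℝ) ≤ off c ξ := by
    intro b hb
    have : cnt ξ b ≤ off c ξ := by
      unfold cnt off
      apply Finset.card_le_card
      intro k hk
      simp only [Finset.mem_filter, Finset.mem_univ, true_and] at hk ⊢
      rw [hk]; exact hb
    exact_mod_cast this
  have h1 := prod_le_of_sum_le (fun k => F (ξ k) ^ 2 / w (ξ k)) (fun k => by have := hw (ξ k); positivity) 1 one_pos (by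
    rw [sum_cntR ξ (fun b => F b ^ 2 / w b), ← Finset.add_sum_erase _ _ (mem_univ c)]
    rw [← Finset.add_sum_erase _ _ (mem_univ c)] at hF
    have h2 : ∑ b ∈ univ.erase c, (cnt ξ b : ℝ) * (F b ^ 2 / w b) ≤ (off c ξ / e) * ∑ b ∈ univ.erase c, F b ^ 2 := by
      rw [Finset.mul_sum]
      apply Finset.sum_le_sum
      intro b hb
      have hbc := Finset.ne_of_mem_erase hb
      simp only [w, if_neg hbc]
      calc _ = (cnt ξ b : ℝ) / e * F b ^ 2 := by ring
        _ ≤ _ := by have := hother b hbc; gcongr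
    have h3 : w c = 1 := by simp [w]
    rw [h3]
    have hx1 : F c ^ 2 ≤ 1 := by have := hF1 c; have := hF0 c; nlinarith
    set x := F c ^ 2 with hx
    set m : ℝ := (off c ξ : ℝ) with hm
    have hm0 : 0 ≤ m := by positivity
    have h4 : (m / e) * ∑ b ∈ univ.erase c, F b ^ 2 ≤ (m / e) * (1 + e - x) := by
      gcongr; linarith
    have h5 : (cnt ξ c : ℝ) * (x / 1) = (n - m) * x := by rw [← hcc]; ring
    rw [h5]
    -- (n-m) x + (m/e)(1+e-x) ≤ n
    have h6 : m / e ≤ n - m := by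
      rw [div_le_iff₀ he]
      have : e * ((1 - δ) * n) ≤ e * (n - m) := by gcongr; linarith
      nlinarith
    have h7 : (m / e) * e = m := by field_simp
    have h8 : (m/e) * (1 - x) ≤ (n - m) * (1 - x) := by
      apply mul_le_mul_of_nonneg_right h6; linarith
    nlinarith)
  rw [Finset.prod_div_distrib] at h1
  have h9 : ∏ k, w (ξ k) = e ^ off c ξ := by
    simp only [w]
    rw [Finset.prod_ite]
    simp [off]
  rw [h9, one_pow, div_le_one (by positivity), Finset.prod_pow] at h1
  exact h1

lemma alpha_sq {n p : ℕ} [NeZero p] (hn : 0 < n) (t : ℝ) (v : Fin n → ZMod p) (hv : nearU t v) :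
    (p:ℝ) * ∑ a, ((cnt v a : ℝ) / n) ^ 2 ≤ 1 + ((p:ℝ) * t) ^ 2 := by
  have hn0 : (0:ℝ) < n := by exact_mod_cast hn
  have hp0 : (0:ℝ) < p := by exact_mod_cast Nat.pos_of_ne_zero (NeZero.ne p)
  have hs : ∑ a, (cnt v a : ℝ) / n = 1 := by
    rw [← Finset.sum_div, ← Nat.cast_sum, sum_cnt, Fintype.card_fin]; exact div_self hn0.ne'
  have h1 : ∀ a, ((cnt v a : ℝ) / n) ^ 2 ≤ t ^ 2 + 2 / p * ((cnt v a : ℝ) / n) - (1 / p) ^ 2 := by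
    intro a
    have := sq_le_sq.mpr ((hv a).trans (le_abs_self t))
    have e : ((cnt v a : ℝ) / n - 1 / p) ^ 2 = ((cnt v a : ℝ) / n) ^ 2 - 2 / p * ((cnt v a : ℝ) / n) + (1 / p) ^ 2 := by ring
    linarith
  calc _ ≤ (p:ℝ) * ∑ a : ZMod p, (t ^ 2 + 2 / p * ((cnt v a : ℝ) / n) - (1 / p) ^ 2) := by
        gcongr with a; exact h1 a
    _ = _ := by
        rw [Finset.sum_sub_distrib, Finset.sum_add_distrib, ← Finset.mul_sum, hs]
        simp [ZMod.card]
        field_simp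
        ring

lemma alpha_sum {n p : ℕ} [NeZero p] (hn : 0 < n) (v : Fin n → ZMod p) :
    ∑ a, (cnt v a : ℝ) / n = 1 := by
  have hn0 : (0:ℝ) < n := by exact_mod_cast hn
  rw [← Finset.sum_div, ← Nat.cast_sum, sum_cnt, Fintype.card_fin]; exact div_self hn0.ne'

lemma FF_nonneg {p : ℕ} [NeZero p] (α : ZMod p → ℝ) (θ : ZMod p → ℂ) (b : ZMod p) : 0 ≤ FF α θ b :=
  norm_nonneg _

/-- far characters -/
lemma GG_far {n p d : ℕ} [NeZero p] (hn : 0 < n) (hd : 3 ≤ d) (δ t : ℝ) (hδ0 : 0 ≤ δ) (hδ1 : δ ≤ 1)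
    (v ξ : Fin n → ZMod p) (hv : nearU t v) (hξ : ∀ c, δ * n ≤ off c ξ) :
    ‖GG d v ξ‖ ≤ ((Real.exp 1 * ((n * d : ℕ) + 1)) ^ p * (n * d).factorial *
      ((1 + ((p:ℝ) * t) ^ 2) * Real.sqrt ((1 + ((p:ℝ) * t) ^ 2) * (1 - δ))) ^ n)
      * ∏ b, ((cnt ξ b : ℝ) / n) ^ cnt ξ b := by
  have hn0 : (0:ℝ) < n := by exact_mod_cast hn
  set T := 1 + ((p:ℝ) * t) ^ 2 with hT
  have hT0 : 0 < T := by positivity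
  set E := ∏ b, ((cnt ξ b : ℝ) / n) ^ cnt ξ b with hE
  have hE0 : 0 < E := type_pos hn ξ
  have hEδ : E ≤ (1 - δ) ^ n := by
    have : (1 - δ) ^ n = ∏ b, (1 - δ) ^ cnt ξ b := by
      rw [Finset.prod_pow_eq_pow_sum, sum_cnt]; simp
    rw [this, hE]
    apply Finset.prod_le_prod
    · intro b _; positivity
    · intro b _
      apply pow_le_pow_left₀ (by positivity)
      rw [div_le_iff₀ hn0]
      have : (cnt ξ b : ℝ) + off b ξ = n := by exact_mod_cast cnt_add_off b ξ
      have := hξ b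
      linarith
  set Y := min 1 (Real.sqrt (T ^ n * E)) with hY
  have hY0 : 0 ≤ Y := le_min zero_le_one (Real.sqrt_nonneg _)
  have h1 := GG_bound hn (by omega : 0 < d) v ξ Y (by
    intro θ hθ
    apply le_min
    · apply Finset.prod_le_one
      · intro k _; exact FF_nonneg _ _ _
      · intro k _; exact FF_le_one _ (fun a => by positivity) (alpha_sum hn v) θ hθ _
    · apply Real.le_sqrt_of_sq_le
      apply type_bound hn _ T hT0
      rw [FF_plancherel _ θ hθ]
      exact alpha_sq hn t v hv)
  refine h1.trans ?_
  rw [mul_assoc _ _ E]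
  apply mul_le_mul_of_nonneg_left _ (by positivity)
  have h2 : Y ^ d ≤ Y ^ 3 := pow_le_pow_of_le_one hY0 (min_le_left _ _) hd
  refine h2.trans ?_
  have h3 : Y ^ 3 ≤ Real.sqrt (T ^ n * E) ^ 3 := pow_le_pow_left₀ hY0 (min_le_right _ _) 3
  refine h3.trans ?_
  have h4 : Real.sqrt (T ^ n * E) ^ 3 = T ^ n * E * Real.sqrt (T ^ n * E) := by
    rw [pow_succ, Real.sq_sqrt (by positivity)]
  rw [h4]
  have h5 : Real.sqrt (T ^ n * E) ≤ Real.sqrt (T * (1 - δ)) ^ n := by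
    rw [Real.sqrt_le_left (by positivity), ← pow_mul, mul_comm n 2, pow_mul, Real.sq_sqrt, mul_pow]
    · gcongr
    · apply mul_nonneg hT0.le; linarith
  calc _ ≤ T ^ n * E * Real.sqrt (T * (1 - δ)) ^ n := by gcongr
    _ = _ := by rw [mul_pow]; ring

/-- near constant characters, pointwise -/
lemma GG_near {n p d : ℕ} [NeZero p] (hn : 0 < n) (hd : 3 ≤ d) (δ t : ℝ) (hδ0 : 0 ≤ δ) (hδ1 : δ < 1)
    (ht : 0 < t) (hpt : (p:ℝ) * t ≤ 1) (hδt : δ ≤ ((p:ℝ) * t) ^ 2 * (1 - δ))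
    (v ξ : Fin n → ZMod p) (hv : nearU t v) (c : ZMod p) (hξ : (off c ξ : ℝ) ≤ δ * n) :
    ‖GG d v ξ‖ ≤ (Real.exp 1 * ((n * d : ℕ) + 1)) ^ p * (n * d).factorial *
      (((p:ℝ) * t) ^ 3) ^ off c ξ := by
  have hp0 : (0:ℝ) < p := by exact_mod_cast Nat.pos_of_ne_zero (NeZero.ne p)
  have hpt0 : 0 < (p:ℝ) * t := by positivity
  have h1 := GG_bound hn (by omega : 0 < d) v ξ (((p:ℝ) * t) ^ off c ξ) (by
    intro θ hθ
    have := near_const_bound hn (FF (fun a => (cnt v a : ℝ) / n) θ) (FF_nonneg _ _) c (((p:ℝ) * t) ^ 2) δ (by positivity) hδ0 hδ1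
      (fun b => FF_le_one _ (fun a => by positivity) (alpha_sum hn v) θ hθ _)
      (by rw [FF_plancherel _ θ hθ]; exact alpha_sq hn t v hv) hδt ξ hξ
    rw [← pow_mul, mul_comm 2, pow_mul] at this
    exact le_of_sq_le_sq this (by positivity))
  refine h1.trans ?_
  apply mul_le_mul_of_nonneg_left _ (by positivity)
  rw [pow_right_comm]
  apply pow_le_pow_left₀ (by positivity)
  exact pow_le_pow_of_le_one hpt0.le hpt hd

lemma card_mgf {n p : ℕ} [NeZero p] (c : ZMod p) (l τ : ℝ) (hl : |l| ≤ 1) :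
    ((univ.filter (fun v : Fin n → ZMod p => τ * n ≤ l * (off c v - (1 - 1 / (p:ℝ)) * n))).card : ℝ)
      ≤ (p:ℝ) ^ n * Real.exp (n * (l ^ 2 - τ)) := by
  have hp1 : (1:ℝ) ≤ p := by exact_mod_cast Nat.pos_of_ne_zero (NeZero.ne p)
  have hp0 : (0:ℝ) < p := by linarith
  set q : ℝ := 1 - 1 / (p:ℝ) with hq
  have hq0 : 0 ≤ q := by
    rw [hq, sub_nonneg, div_le_one hp0]; exact hp1
  have hq1 : q ≤ 1 := by rw [hq]; have : 0 ≤ 1 / (p:ℝ) := by positivity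
                         linarith
  have h1 := sum_off (n := n) c (Real.exp l)
  have h2 : 1 + ((p:ℝ) - 1) * Real.exp l = p * (1 + q * (Real.exp l - 1)) := by
    rw [hq]; field_simp; ring
  have h3 : Real.exp l - 1 ≤ l + l ^ 2 := by
    have := Real.abs_exp_sub_one_sub_id_le hl
    have := (abs_le.mp this).2
    linarith
  have h4 : 1 + q * (Real.exp l - 1) ≤ Real.exp (q * l + l ^ 2) := by
    have := Real.add_one_le_exp (q * l + l ^ 2)
    nlinarith [mul_le_mul_of_nonneg_left h3 hq0, mul_le_mul_of_nonneg_right hq1 (sq_nonneg l)]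
  have h5 : 0 ≤ 1 + q * (Real.exp l - 1) := by
    have := Real.exp_pos l
    nlinarith
  have h6 : ∑ v : Fin n → ZMod p, Real.exp l ^ off c v ≤ (p:ℝ) ^ n * Real.exp (n * (q * l + l ^ 2)) := by
    rw [h1, h2, mul_pow, Real.exp_nat_mul]
    gcongr
  have h7 : ((univ.filter (fun v : Fin n → ZMod p => τ * n ≤ l * (off c v - q * n))).card : ℝ)
      * Real.exp (n * (τ + q * l)) ≤ ∑ v : Fin n → ZMod p, Real.exp l ^ off c v := by
    rw [← nsmul_eq_mul, ← Finset.sum_const]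
    refine le_trans (Finset.sum_le_sum (g := fun v => Real.exp l ^ off c v) ?_)
      (Finset.sum_le_sum_of_subset_of_nonneg (Finset.filter_subset _ _) (fun _ _ _ => by positivity))
    intro v hv
    simp only [Finset.mem_filter, Finset.mem_univ, true_and] at hv
    rw [← Real.exp_nat_mul]
    apply Real.exp_le_exp.mpr
    nlinarith
  have h8 := h7.trans h6
  rw [← le_div_iff₀ (Real.exp_pos _), mul_div_assoc, ← Real.exp_sub] at h8
  refine h8.trans (le_of_eq ?_)
  congr 2; ring

open Classical in
/-- counting vectors that are not near uniform -/
lemma card_not_near {n p : ℕ} [NeZero p] (hn : 0 < n) (t : ℝ) (ht : 0 < t) (ht1 : t ≤ 1) :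
    ((univ.filter (fun v : Fin n → ZMod p => ¬ nearU t v)).card : ℝ)
      ≤ 2 * p * ((p:ℝ) ^ n * Real.exp (-(t ^ 2 / 4) * n)) := by
  have hn0 : (0:ℝ) < n := by exact_mod_cast hn
  let A : ZMod p → ℝ → Finset (Fin n → ZMod p) := fun c l =>
    univ.filter (fun v : Fin n → ZMod p => (t ^ 2 / 2) * n ≤ l * (off c v - (1 - 1 / (p:ℝ)) * n))
  have hsub : univ.filter (fun v : Fin n → ZMod p => ¬ nearU t v) ⊆
      univ.biUnion (fun c => A c (t / 2) ∪ A c (-(t / 2))) := by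
    intro v hv
    simp only [Finset.mem_filter, Finset.mem_univ, true_and, nearU, not_forall, not_le] at hv
    obtain ⟨c, hc⟩ := hv
    simp only [Finset.mem_biUnion, Finset.mem_univ, true_and, Finset.mem_union, A, Finset.mem_filter]
    refine ⟨c, ?_⟩
    have hco : (cnt v c : ℝ) + off c v = n := by exact_mod_cast cnt_add_off c v
    have e1 : (cnt v c : ℝ) / n - 1 / p = -((off c v - (1 - 1 / (p:ℝ)) * n)) / n := by
      have : (cnt v c : ℝ) = n - off c v := by linarith
      rw [this]; field_simp; ring
    rw [e1, lt_abs] at hc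
    set x : ℝ := off c v - (1 - 1 / (p:ℝ)) * n
    rcases hc with hc | hc
    · right
      rw [lt_div_iff₀ hn0] at hc
      nlinarith
    · left
      rw [neg_div, neg_neg, lt_div_iff₀ hn0] at hc
      nlinarith
  have hA : ∀ c l, |l| = t / 2 → ((A c l).card : ℝ) ≤ (p:ℝ) ^ n * Real.exp (-(t ^ 2 / 4) * n) := by
    intro c l hl
    have := card_mgf (n := n) c l (t ^ 2 / 2) (by rw [hl]; linarith)
    refine this.trans (le_of_eq ?_)
    rw [← sq_abs, hl]
    congr 2; ring
  have h1 : (univ.filter (fun v : Fin n → ZMod p => ¬ nearU t v)).card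
      ≤ ∑ c : ZMod p, ((A c (t / 2)).card + (A c (-(t / 2))).card) := by
    refine (Finset.card_le_card hsub).trans (Finset.card_biUnion_le.trans ?_)
    apply Finset.sum_le_sum
    intro c _
    exact Finset.card_union_le _ _
  have h2 : ((univ.filter (fun v : Fin n → ZMod p => ¬ nearU t v)).card : ℝ)
      ≤ ∑ c : ZMod p, (((A c (t / 2)).card : ℝ) + (A c (-(t / 2))).card) := by exact_mod_cast h1
  refine h2.trans ?_
  calc _ ≤ ∑ _c : ZMod p, ((p:ℝ) ^ n * Real.exp (-(t ^ 2 / 4) * n) + (p:ℝ) ^ n * Real.exp (-(t ^ 2 / 4) * n)) := by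
        apply Finset.sum_le_sum
        intro c _
        exact add_le_add (hA c _ (abs_of_pos (by linarith))) (hA c _ (by rw [abs_neg, abs_of_pos (by linarith)]))
    _ = _ := by
        rw [Finset.sum_const, nsmul_eq_mul, Finset.card_univ, ZMod.card]; ring


lemma ZZ_zero {n p : ℕ} (d : ℕ) : ZZ (n := n) (p := p) d 0 = (n * d).factorial := by
  unfold ZZ
  simp [Fintype.card_perm]

lemma ZZ_near_const {n p d : ℕ} [Fact p.Prime] (hgcd : Nat.gcd p d = 1) (hn : 0 < n) (δ : ℝ)
    (hδ : d * δ < 1) (c : ZMod p) (hc : c ≠ 0) (ξ : Fin n → ZMod p) (hξ : (off c ξ : ℝ) ≤ δ * n) :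
    ZZ d ξ = 0 := by
  have hn0 : (0:ℝ) < n := by exact_mod_cast hn
  unfold ZZ
  rw [Finset.card_eq_zero, Finset.filter_eq_empty_iff]
  intro P _ hP
  have hdc : (d : ZMod p) * c ≠ 0 := by
    apply mul_ne_zero _ hc
    intro h
    rw [ZMod.natCast_eq_zero_iff] at h
    rw [Nat.gcd_eq_left h] at hgcd
    exact (Fact.out : p.Prime).one_lt.ne' hgcd
  have hex : ∀ k : Fin n, ∃ i : Fin d, ξ (P (k, i)).1 ≠ c := by
    intro k
    by_contra hcon
    push Not at hcon
    have := hP k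
    simp only [hcon] at this
    apply hdc
    simpa using this
  choose i hi using hex
  have hinj : n ≤ off c ξ * d := by
    have h1 : (univ.image (fun k : Fin n => P (k, i k))).card = n := by
      rw [Finset.card_image_of_injective]
      · simp
      · intro k k' h
        have := P.injective h
        exact (Prod.mk.inj this).1
    have h2 : (univ.image (fun k : Fin n => P (k, i k))) ⊆ (univ.filter (fun k => ξ k ≠ c)) ×ˢ (univ : Finset (Fin d)) := by
      intro s hs
      simp only [Finset.mem_image, Finset.mem_univ, true_and] at hs
      obtain ⟨k, rfl⟩ := hs
      simp [hi k]
    have h3 := Finset.card_le_card h2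
    rw [h1, Finset.card_product] at h3
    simpa [off] using h3
  have h4 : (n:ℝ) ≤ off c ξ * d := by exact_mod_cast hinj
  have h5 : (off c ξ : ℝ) * d ≤ δ * n * d := by gcongr
  nlinarith

lemma card_near_const {n p : ℕ} [NeZero p] (c : ZMod p) (δ : ℝ) (hδ : 0 < δ) (hδ1 : δ < 1) :
    ((univ.filter (fun v : Fin n → ZMod p => (off c v : ℝ) ≤ δ * n)).card : ℝ)
      ≤ Real.exp (n * (δ * Real.log (1 / δ) + p * δ)) := by
  have h1 := sum_off (n := n) c δ
  have hp1 : (1:ℝ) ≤ p := by exact_mod_cast Nat.pos_of_ne_zero (NeZero.ne p)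
  have h2 : (1 + ((p:ℝ) - 1) * δ) ^ n ≤ Real.exp (n * (p * δ)) := by
    rw [Real.exp_nat_mul]
    apply pow_le_pow_left₀ (by nlinarith)
    have := Real.add_one_le_exp (p * δ)
    nlinarith
  have h7 : ((univ.filter (fun v : Fin n → ZMod p => (off c v : ℝ) ≤ δ * n)).card : ℝ)
      * Real.exp (n * (δ * Real.log δ)) ≤ ∑ v : Fin n → ZMod p, δ ^ off c v := by
    rw [← nsmul_eq_mul, ← Finset.sum_const]
    refine le_trans (Finset.sum_le_sum (g := fun v => δ ^ off c v) ?_)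
      (Finset.sum_le_sum_of_subset_of_nonneg (Finset.filter_subset _ _) (fun _ _ _ => by positivity))
    intro v hv
    simp only [Finset.mem_filter, Finset.mem_univ, true_and] at hv
    have : δ ^ off c v = Real.exp (off c v * Real.log δ) := by
      rw [Real.exp_nat_mul, Real.exp_log hδ]
    rw [this]
    apply Real.exp_le_exp.mpr
    have := Real.log_neg hδ hδ1
    nlinarith
  rw [h1] at h7
  have h8 := h7.trans h2
  rw [← le_div_iff₀ (Real.exp_pos _), ← Real.exp_sub] at h8
  refine h8.trans (le_of_eq ?_)
  rw [one_div, Real.log_inv]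
  congr 1; ring

lemma sum_exists_le {n p : ℕ} [NeZero p] (δ : ℝ) (F : (Fin n → ZMod p) → ℝ) (hF : ∀ ξ, 0 ≤ F ξ) (B : ℝ)
    (h : ∀ c : ZMod p, ∑ ξ ∈ univ.filter (fun ξ : Fin n → ZMod p => (off c ξ : ℝ) ≤ δ * n), F ξ ≤ B) :
    ∑ ξ ∈ univ.filter (fun ξ : Fin n → ZMod p => ∃ c, (off c ξ : ℝ) ≤ δ * n), F ξ ≤ p * B := by
  classical
  have h1 : ∑ ξ ∈ univ.filter (fun ξ : Fin n → ZMod p => ∃ c, (off c ξ : ℝ) ≤ δ * n), F ξ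
      ≤ ∑ c : ZMod p, ∑ ξ ∈ univ.filter (fun ξ : Fin n → ZMod p => (off c ξ : ℝ) ≤ δ * n), F ξ := by
    simp only [Finset.sum_filter]
    rw [Finset.sum_comm]
    apply Finset.sum_le_sum
    intro ξ _
    have hnn : ∀ c ∈ (univ : Finset (ZMod p)), 0 ≤ (if (off c ξ : ℝ) ≤ δ * n then F ξ else 0) := by
      intro c _
      split_ifs
      · exact hF ξ
      · exact le_rfl
    split_ifs with hex
    · obtain ⟨c, hc⟩ := hex
      have := Finset.single_le_sum hnn (mem_univ c)
      rwa [if_pos hc] at this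
    · exact Finset.sum_nonneg hnn
  refine h1.trans ?_
  calc _ ≤ ∑ _c : ZMod p, B := Finset.sum_le_sum (fun c _ => h c)
    _ = _ := by simp [ZMod.card]

lemma star_near {n p d : ℕ} [NeZero p] (hn : 0 < n) (hd : 3 ≤ d) (δ t : ℝ) (hδ0 : 0 ≤ δ) (hδ1 : δ < 1)
    (ht : 0 < t) (hpt : (p:ℝ) * t ≤ 1) (hδt : δ ≤ ((p:ℝ) * t) ^ 2 * (1 - δ))
    (v : Fin n → ZMod p) (hv : nearU t v) :
    ∑ ξ ∈ univ.filter (fun ξ : Fin n → ZMod p => ∃ c, (off c ξ : ℝ) ≤ δ * n), ‖GG d v ξ‖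
    ≤ p * ((Real.exp 1 * ((n * d : ℕ) + 1)) ^ p * (n * d).factorial * Real.exp (n * (p * ((p:ℝ) * t) ^ 3))) := by
  have hp1 : (1:ℝ) ≤ p := by exact_mod_cast Nat.pos_of_ne_zero (NeZero.ne p)
  apply sum_exists_le δ _ (fun _ => norm_nonneg _)
  intro c
  calc _ ≤ ∑ ξ ∈ univ.filter (fun ξ : Fin n → ZMod p => (off c ξ : ℝ) ≤ δ * n),
        (Real.exp 1 * ((n * d : ℕ) + 1)) ^ p * (n * d).factorial * (((p:ℝ) * t) ^ 3) ^ off c ξ := by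
        apply Finset.sum_le_sum
        intro ξ hξ
        simp only [Finset.mem_filter, Finset.mem_univ, true_and] at hξ
        exact GG_near hn hd δ t hδ0 hδ1 ht hpt hδt v ξ hv c hξ
    _ ≤ ∑ ξ : Fin n → ZMod p,
        (Real.exp 1 * ((n * d : ℕ) + 1)) ^ p * (n * d).factorial * (((p:ℝ) * t) ^ 3) ^ off c ξ :=
        Finset.sum_le_sum_of_subset_of_nonneg (Finset.filter_subset _ _) (fun _ _ _ => by positivity)
    _ = (Real.exp 1 * ((n * d : ℕ) + 1)) ^ p * (n * d).factorial * (1 + ((p:ℝ) - 1) * (((p:ℝ) * t) ^ 3)) ^ n := by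
        rw [← Finset.mul_sum, sum_off]
    _ ≤ _ := by
        rw [Real.exp_nat_mul]
        apply mul_le_mul_of_nonneg_left _ (by positivity)
        have hx : 0 ≤ ((p:ℝ) * t) ^ 3 := by positivity
        apply pow_le_pow_left₀ (by nlinarith)
        have := Real.add_one_le_exp (p * ((p:ℝ) * t) ^ 3)
        nlinarith

lemma star_any {n p d : ℕ} [NeZero p] (δ : ℝ) (hδ : 0 < δ) (hδ1 : δ < 1) (v : Fin n → ZMod p) :
    ∑ ξ ∈ univ.filter (fun ξ : Fin n → ZMod p => ∃ c, (off c ξ : ℝ) ≤ δ * n), ‖GG d v ξ‖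
    ≤ p * ((n * d).factorial * Real.exp (n * (δ * Real.log (1 / δ) + p * δ))) := by
  apply sum_exists_le δ _ (fun _ => norm_nonneg _)
  intro c
  calc _ ≤ ∑ ξ ∈ univ.filter (fun ξ : Fin n → ZMod p => (off c ξ : ℝ) ≤ δ * n), ((n * d).factorial : ℝ) :=
        Finset.sum_le_sum (fun ξ _ => GG_trivial d v ξ)
    _ ≤ _ := by
        rw [Finset.sum_const, nsmul_eq_mul, mul_comm]
        gcongr
        exact card_near_const c δ hδ hδ1

lemma star_ZZ {n p d : ℕ} [Fact p.Prime] (hd : 3 ≤ d) (hgcd : Nat.gcd p d = 1) (hn : 0 < n) (δ : ℝ) (hδ : 0 < δ)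
    (hdδ : d * δ < 1) (hδ2 : Real.exp (p + 2^d) * Real.sqrt δ ≤ 1/4) :
    ∑ ξ ∈ univ.filter (fun ξ : Fin n → ZMod p => ∃ c, (off c ξ : ℝ) ≤ δ * n), (ZZ d ξ : ℝ)
    ≤ (n*d).factorial * (1 + 8*Real.exp (p+2^d)/Real.sqrt n) := by
  classical
  have hsm := sm_total (p := p) hd δ hδ hδ2 hn
  have h1 : ∑ ξ ∈ univ.filter (fun ξ : Fin n → ZMod p => ∃ c, (off c ξ : ℝ) ≤ δ * n), (ZZ d ξ : ℝ)
      ≤ ∑ ξ ∈ insert 0 (univ.filter (fun v : Fin n → ZMod p => (off 0 v:ℝ) ≤ δ*n ∧ v ≠ 0)), (ZZ d ξ : ℝ) := by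
    rw [← Finset.sum_filter_ne_zero]
    refine Finset.sum_le_sum_of_subset_of_nonneg ?_ (fun _ _ _ => by positivity)
    intro ξ hξ
    simp only [Finset.mem_filter, Finset.mem_univ, true_and] at hξ
    obtain ⟨hξ, hne⟩ := hξ
    obtain ⟨c, hc⟩ := hξ
    have hc0 : c = 0 := by
      by_contra hc0
      apply hne
      rw [ZZ_near_const hgcd hn δ hdδ c hc0 ξ hc]; simp
    subst hc0
    simp only [Finset.mem_insert, Finset.mem_filter, Finset.mem_univ, true_and]
    tauto
  refine h1.trans ?_
  rw [Finset.sum_insert (by simp), ZZ_zero]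
  linarith

open Classical in
lemma far_sum {n p d : ℕ} [NeZero p] (hn : 0 < n) (hd : 3 ≤ d) (δ t : ℝ) (hδ0 : 0 ≤ δ) (hδ1 : δ ≤ 1)
    (v : Fin n → ZMod p) (hv : nearU t v) :
    ∑ ξ ∈ (univ.filter (fun ξ : Fin n → ZMod p => ∃ c, (off c ξ : ℝ) ≤ δ * n))ᶜ, ‖GG d v ξ‖
    ≤ ((n:ℝ) + 1) ^ p * ((Real.exp 1 * ((n * d : ℕ) + 1)) ^ p * (n * d).factorial *
      ((1 + ((p:ℝ) * t) ^ 2) * Real.sqrt ((1 + ((p:ℝ) * t) ^ 2) * (1 - δ))) ^ n) := by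
  have := sum_types hn ((univ.filter (fun ξ : Fin n → ZMod p => ∃ c, (off c ξ : ℝ) ≤ δ * n))ᶜ)
    (fun ξ => ‖GG d v ξ‖) _ (by positivity) (fun ξ hξ => GG_far hn hd δ t hδ0 hδ1 v ξ hv (by
      simp only [Finset.mem_compl, Finset.mem_filter, Finset.mem_univ, true_and, not_exists, not_le] at hξ
      exact fun c => (hξ c).le))
  rwa [ZMod.card] at this

open Classical in
lemma U_dual {n p d : ℕ} [NeZero p] (U S : Finset (Fin n → ZMod p)) :
    (p:ℝ) ^ n * ∑ v ∈ U, (ZZ d v : ℝ) ≤ (∑ v ∈ U, ∑ ξ ∈ Sᶜ, ‖GG d v ξ‖) + (p:ℝ) ^ n * ∑ ξ ∈ S, (ZZ d ξ : ℝ)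
      + ∑ v ∈ Uᶜ, ∑ ξ ∈ S, ‖GG d v ξ‖ := by
  have h1 : ((p:ℂ) ^ n * ∑ v ∈ U, (ZZ d v : ℂ)) = (∑ v ∈ U, ∑ ξ ∈ Sᶜ, GG d v ξ) + (p:ℂ) ^ n * ∑ ξ ∈ S, (ZZ d ξ : ℂ)
      - ∑ v ∈ Uᶜ, ∑ ξ ∈ S, GG d v ξ := by
    rw [Finset.mul_sum, Finset.mul_sum]
    simp only [← GG_sum]
    have e2 : ∀ ξ : Fin n → ZMod p, ∑ v, GG d ξ v = ∑ v ∈ U, GG d v ξ + ∑ v ∈ Uᶜ, GG d v ξ := by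
      intro ξ
      rw [Finset.sum_add_sum_compl]
      exact Finset.sum_congr rfl (fun v _ => GG_symm d ξ v)
    have e1 : ∀ v : Fin n → ZMod p, ∑ ξ, GG d v ξ = ∑ ξ ∈ S, GG d v ξ + ∑ ξ ∈ Sᶜ, GG d v ξ := by
      intro ξ
      rw [Finset.sum_add_sum_compl]
    have e3 : ∑ ξ ∈ S, ∑ v, GG d ξ v = ∑ v ∈ U, ∑ ξ ∈ S, GG d v ξ + ∑ v ∈ Uᶜ, ∑ ξ ∈ S, GG d v ξ := by
      simp only [e2]
      rw [Finset.sum_add_distrib, Finset.sum_comm, Finset.sum_comm (s := S) (t := Uᶜ)]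
    rw [e3]
    simp only [e1]
    rw [Finset.sum_add_distrib]
    ring
  have h2 := congrArg norm h1
  have h3 : ‖(p:ℂ) ^ n * ∑ v ∈ U, (ZZ d v : ℂ)‖ = (p:ℝ) ^ n * ∑ v ∈ U, (ZZ d v : ℝ) := by
    rw [← Nat.cast_sum, norm_mul, norm_pow, Complex.norm_natCast, Complex.norm_natCast, Nat.cast_sum]
  have h4 : ‖(p:ℂ) ^ n * ∑ v ∈ S, (ZZ d v : ℂ)‖ = (p:ℝ) ^ n * ∑ v ∈ S, (ZZ d v : ℝ) := by
    rw [← Nat.cast_sum, norm_mul, norm_pow, Complex.norm_natCast, Complex.norm_natCast, Nat.cast_sum]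
  rw [h3] at h2
  rw [h2, ← h4]
  refine (norm_sub_le _ _).trans (add_le_add ((norm_add_le _ _).trans (add_le_add ?_ le_rfl)) ?_)
  · exact (norm_sum_le _ _).trans (Finset.sum_le_sum fun _ _ => norm_sum_le _ _)
  · exact (norm_sum_le _ _).trans (Finset.sum_le_sum fun _ _ => norm_sum_le _ _)

open Classical in
lemma U_total {n p d : ℕ} [Fact p.Prime] (hn : 0 < n) (hd : 3 ≤ d) (hgcd : Nat.gcd p d = 1) (δ t1 t2 : ℝ)
    (hδ0 : 0 < δ) (hδ1 : δ < 1) (ht1 : 0 < t1) (ht11 : t1 ≤ 1) (ht2 : 0 < t2) (ht21 : t2 ≤ 1)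
    (hpt : (p:ℝ) * t2 ≤ 1) (hδt : δ ≤ ((p:ℝ) * t2) ^ 2 * (1 - δ))
    (hdδ : d * δ < 1) (hδ2 : Real.exp (p + 2^d) * Real.sqrt δ ≤ 1/4) :
    ∑ v ∈ univ.filter (fun v : Fin n → ZMod p => nearU t1 v), (ZZ d v : ℝ) ≤
    (n*d).factorial * (1 + 8*Real.exp (p+2^d)/Real.sqrt n
      + ((n:ℝ) + 1) ^ p * (Real.exp 1 * ((n * d : ℕ) + 1)) ^ p *
        ((1 + ((p:ℝ) * t1) ^ 2) * Real.sqrt ((1 + ((p:ℝ) * t1) ^ 2) * (1 - δ))) ^ n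
      + 2 * p ^ 2 * (Real.exp 1 * ((n * d : ℕ) + 1)) ^ p * Real.exp (p * ((p:ℝ) * t2) ^ 3 - t1 ^ 2 / 4) ^ n
      + 2 * p ^ 2 * Real.exp (δ * Real.log (1 / δ) + p * δ - t2 ^ 2 / 4) ^ n) := by
  have hp0 : (0:ℝ) < p := by exact_mod_cast (Fact.out : p.Prime).pos
  set U := univ.filter (fun v : Fin n → ZMod p => nearU t1 v) with hU
  set S := univ.filter (fun ξ : Fin n → ZMod p => ∃ c, (off c ξ : ℝ) ≤ δ * n) with hS
  set W := univ.filter (fun v : Fin n → ZMod p => ¬ nearU t1 v)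
  set W2 := univ.filter (fun v : Fin n → ZMod p => ¬ nearU t2 v)
  have hdual := U_dual (d := d) U S
  set K : ℝ := ((n * d).factorial : ℝ) with hK
  have hK0 : 0 < K := by rw [hK]; positivity
  set Q : ℝ := (Real.exp 1 * ((n * d : ℕ) + 1)) ^ p with hQ
  have hQ0 : 0 < Q := by rw [hQ]; positivity
  set r1 := (1 + ((p:ℝ) * t1) ^ 2) * Real.sqrt ((1 + ((p:ℝ) * t1) ^ 2) * (1 - δ)) with hr1
  have hr10 : 0 ≤ r1 := by positivity
  have b1 : ∑ v ∈ U, ∑ ξ ∈ Sᶜ, ‖GG d v ξ‖ ≤ (p:ℝ) ^ n * (((n:ℝ) + 1) ^ p * (Q * K * r1 ^ n)) := by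
    calc _ ≤ ∑ v ∈ U, ((n:ℝ) + 1) ^ p * (Q * K * r1 ^ n) := by
          apply Finset.sum_le_sum
          intro v hv
          exact far_sum hn hd δ t1 hδ0.le hδ1.le v (by simpa [hU] using hv)
      _ ≤ _ := by
          rw [Finset.sum_const, nsmul_eq_mul]
          gcongr
          have : U.card ≤ p ^ n := (Finset.card_le_univ _).trans (by simp [ZMod.card])
          exact_mod_cast this
  have b2 : ∑ ξ ∈ S, (ZZ d ξ : ℝ) ≤ K * (1 + 8*Real.exp (p+2^d)/Real.sqrt n) := by
    have := star_ZZ hd hgcd hn δ hδ0 hdδ hδ2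
    convert this
  have c1 : (W.card : ℝ) ≤ _ := card_not_near hn t1 ht1 ht11
  have c2 : (W2.card : ℝ) ≤ _ := card_not_near hn t2 ht2 ht21
  set x1 := Real.exp (n * (p * ((p:ℝ) * t2) ^ 3))
  set x2 := Real.exp (n * (δ * Real.log (1 / δ) + p * δ))
  have b3 : ∑ v ∈ Uᶜ, ∑ ξ ∈ S, ‖GG d v ξ‖ ≤ W.card * (p * (Q * K * x1)) + W2.card * (p * (K * x2)) := by
    have hsub : Uᶜ = W := by ext v; simp [U, W]
    rw [hsub, ← Finset.sum_filter_add_sum_filter_not W (fun v => nearU t2 v)]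
    apply add_le_add
    · calc _ ≤ ∑ v ∈ W with nearU t2 v, p * (Q * K * x1) := by
            apply Finset.sum_le_sum
            intro v hv
            have := star_near hn hd δ t2 hδ0.le hδ1 ht2 hpt hδt v (Finset.mem_filter.mp hv).2
            convert this
        _ ≤ _ := by
            rw [Finset.sum_const, nsmul_eq_mul]
            have := Finset.card_le_card (Finset.filter_subset (fun v => nearU t2 v) W)
            gcongr
    · calc _ ≤ ∑ v ∈ W with ¬ nearU t2 v, p * (K * x2) := by
            apply Finset.sum_le_sum
            intro v hv
            have := star_any (d := d) δ hδ0 hδ1 v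
            convert this
        _ ≤ _ := by
            rw [Finset.sum_const, nsmul_eq_mul]
            have : #{v ∈ W | ¬ nearU t2 v} ≤ W2.card := by
              apply Finset.card_le_card
              intro v hv
              simp only [Finset.mem_filter, W2, Finset.mem_univ, true_and] at hv ⊢
              exact hv.2
            gcongr
  have b4 : (W.card : ℝ) * (p * (Q * K * x1)) ≤
      (p:ℝ) ^ n * (K * (2 * p ^ 2 * Q * Real.exp (p * ((p:ℝ) * t2) ^ 3 - t1 ^ 2 / 4) ^ n)) := by
    calc _ ≤ 2 * p * ((p:ℝ) ^ n * Real.exp (-(t1 ^ 2 / 4) * n)) * (p * (Q * K * x1)) := by gcongr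
      _ = (p:ℝ) ^ n * (K * (2 * p ^ 2 * Q * (Real.exp (-(t1 ^ 2 / 4) * n) * x1))) := by ring
      _ = _ := by
        rw [← Real.exp_add, ← Real.exp_nat_mul]
        congr 5; ring
  have b5 : (W2.card : ℝ) * (p * (K * x2)) ≤
      (p:ℝ) ^ n * (K * (2 * p ^ 2 * Real.exp (δ * Real.log (1 / δ) + p * δ - t2 ^ 2 / 4) ^ n)) := by
    calc _ ≤ 2 * p * ((p:ℝ) ^ n * Real.exp (-(t2 ^ 2 / 4) * n)) * (p * (K * x2)) := by gcongr
      _ = (p:ℝ) ^ n * (K * (2 * p ^ 2 * (Real.exp (-(t2 ^ 2 / 4) * n) * x2))) := by ring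
      _ = _ := by
        rw [← Real.exp_add, ← Real.exp_nat_mul]
        congr 5; ring
  have b6 := mul_le_mul_of_nonneg_left b2 (by positivity : (0:ℝ) ≤ (p:ℝ) ^ n)
  have hpn : (0:ℝ) < (p:ℝ) ^ n := by positivity
  apply le_of_mul_le_mul_left _ hpn
  linarith

lemma params_exist (p d : ℕ) (hp : 1 ≤ p) : ∃ δ t1 t2 : ℝ, 0 < δ ∧ δ < 1 ∧ 0 < t1 ∧ t1 ≤ 1 ∧ 0 < t2 ∧ t2 ≤ 1 ∧
    (p:ℝ) * t2 ≤ 1 ∧ δ ≤ ((p:ℝ) * t2) ^ 2 * (1 - δ) ∧ d * δ < 1 ∧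
    Real.exp (p + 2^d) * Real.sqrt δ ≤ 1/4 ∧
    (1 + ((p:ℝ) * t1) ^ 2) * Real.sqrt ((1 + ((p:ℝ) * t1) ^ 2) * (1 - δ)) < 1 ∧
    p * ((p:ℝ) * t2) ^ 3 - t1 ^ 2 / 4 < 0 ∧
    δ * Real.log (1 / δ) + p * δ - t2 ^ 2 / 4 < 0 := by
  have hp1 : (1:ℝ) ≤ p := by exact_mod_cast hp
  have hd0 : (0:ℝ) ≤ d := by positivity
  set C := Real.exp ((p:ℝ) + 2^d) with hC
  have hC0 : 0 < C := Real.exp_pos _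
  have hp40 : (1:ℝ) ≤ (p:ℝ)^4 := one_le_pow₀ hp1
  set M : ℝ := 100 * (p:ℝ) ^ 4 + d + 4 * C with hM
  have hM0 : 0 < M := by positivity
  set s : ℝ := 1 / M with hs
  have hs0 : 0 < s := by positivity
  have hsM : M * s = 1 := by rw [hs]; field_simp
  have h1 : 100 * (p:ℝ) ^ 4 * s ≤ 1 := by
    rw [← hsM]; gcongr; rw [hM]; linarith
  have h2 : d * s < 1 := by
    rw [← hsM]; gcongr; rw [hM]; linarith
  have h3 : C * s ≤ 1 / 4 := by
    have : 4 * C * s ≤ 1 := by rw [← hsM]; gcongr; rw [hM]; linarith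
    linarith
  have hp2 : (p:ℝ) ≤ (p:ℝ)^4 := le_self_pow₀ hp1 (by norm_num)
  have hp3 : (p:ℝ)^2 ≤ (p:ℝ)^4 := pow_le_pow_right₀ hp1 (by norm_num)
  have h4 : 100 * (p:ℝ) * s ≤ 1 := by
    refine le_trans ?_ h1; gcongr
  have h5 : 100 * (p:ℝ)^2 * s ≤ 1 := by
    refine le_trans ?_ h1; gcongr
  have h6 : 100 * s ≤ 1 := by nlinarith
  have hs1 : s ≤ 1 := by linarith
  have hpw : ∀ k : ℕ, k ≠ 0 → s ^ k ≤ s := fun k hk => pow_le_of_le_one hs0.le hs1 hk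
  refine ⟨s ^ 15, s ^ 8, s ^ 6, by positivity, ?_, by positivity, pow_le_one₀ hs0.le hs1, by positivity,
    pow_le_one₀ hs0.le hs1, ?_, ?_, ?_, ?_, ?_, ?_, ?_⟩
  · have := hpw 15 (by norm_num); linarith
  · have := hpw 6 (by norm_num); nlinarith
  · have := hpw 15 (by norm_num)
    have e3 := hpw 3 (by norm_num)
    have e : ((p:ℝ) * s ^ 6) ^ 2 = (p:ℝ) ^ 2 * s ^ 12 := by ring
    rw [e]
    have hpp : (1:ℝ) ≤ (p:ℝ)^2 := one_le_pow₀ hp1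
    calc s ^ 15 = 1 * s ^ 12 * s ^ 3 := by ring
      _ ≤ (p:ℝ) ^ 2 * s ^ 12 * (1 - s ^ 15) := by gcongr; linarith
  · have := hpw 15 (by norm_num)
    nlinarith
  · have : Real.sqrt (s ^ 15) ≤ s := by
      rw [Real.sqrt_le_left hs0.le]
      exact pow_le_pow_of_le_one hs0.le hs1 (by norm_num)
    calc C * Real.sqrt (s ^ 15) ≤ C * s := by gcongr
      _ ≤ _ := h3
  · have e : ((p:ℝ) * s ^ 8) ^ 2 = (p:ℝ) ^ 2 * s ^ 16 := by ring
    rw [e]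
    set x := (p:ℝ) ^ 2 * s ^ 16 with hx
    have hx0 : 0 < x := by positivity
    have hxs : 100 * x ≤ s ^ 15 := by
      calc 100 * x = (100 * (p:ℝ)^2 * s) * s ^ 15 := by rw [hx]; ring
        _ ≤ 1 * s ^ 15 := by gcongr
        _ = _ := one_mul _
    have h15 : s ^ 15 ≤ 1 := pow_le_one₀ hs0.le hs1
    have hx1 : x ≤ 1 := by linarith
    set y := s ^ 15
    have hy0 : 0 ≤ (1 + x) * (1 - y) := mul_nonneg (by linarith) (by linarith)
    have hr0 : 0 ≤ (1 + x) * Real.sqrt ((1 + x) * (1 - y)) := by positivity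
    rw [← sq_lt_one_iff₀ hr0, mul_pow, Real.sq_sqrt hy0]
    have hx3 : (1 + x) ^ 3 ≤ 1 + 7 * x := by nlinarith [mul_nonneg hx0.le (by linarith : 0 ≤ 1 - x), mul_nonneg (mul_nonneg hx0.le hx0.le) (by linarith : 0 ≤ 1 - x)]
    calc (1 + x) ^ 2 * ((1 + x) * (1 - y)) = (1 + x) ^ 3 * (1 - y) := by ring
      _ ≤ (1 + 7 * x) * (1 - y) := by gcongr
      _ < 1 := by nlinarith
  · have e : p * ((p:ℝ) * s ^ 6) ^ 3 = (100 * (p:ℝ) ^ 4 * s) * s * s ^ 16 / 100 := by ring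
    have e2 : (s ^ 8) ^ 2 = s ^ 16 := by ring
    rw [e, e2]
    have h16 : 0 < s ^ 16 := by positivity
    have : (100 * (p:ℝ) ^ 4 * s) * s * s ^ 16 ≤ 1 * 1 * s ^ 16 := by gcongr
    linarith
  · have hlog : Real.log (1 / s ^ 15) ≤ 15 * (1 / s) := by
      have : 1 / s ^ 15 = (1 / s) ^ 15 := by rw [div_pow 1 s, one_pow]
      rw [this, Real.log_pow]
      push_cast
      have := Real.log_le_sub_one_of_pos (by positivity : 0 < 1 / s)
      linarith
    have a1 : s ^ 15 * Real.log (1 / s ^ 15) ≤ 15 * s ^ 14 := by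
      calc _ ≤ s ^ 15 * (15 * (1 / s)) := by gcongr
        _ = _ := by field_simp
    have h12 : 0 < s ^ 12 := by positivity
    have a2 : 100 * 100 * s ^ 14 ≤ s ^ 12 := by
      calc 100 * 100 * s ^ 14 = (100 * s) * (100 * s) * s ^ 12 := by ring
        _ ≤ 1 * 1 * s ^ 12 := by gcongr
        _ = _ := by ring
    have a3 : 100 * (p * s ^ 15) ≤ s ^ 12 := by
      calc 100 * (p * s ^ 15) = (100 * p * s) * s ^ 2 * s ^ 12 := by ring
        _ ≤ 1 * 1 * s ^ 12 := by gcongr; exact pow_le_one₀ hs0.le hs1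
        _ = _ := by ring
    have e2 : (s ^ 6) ^ 2 = s ^ 12 := by ring
    rw [e2]
    linarith

lemma poly_tendsto (p d : ℕ) (hd : 1 ≤ d) (r : ℝ) (hr0 : 0 ≤ r) (hr1 : r < 1) :
    Filter.Tendsto (fun n : ℕ => ((n:ℝ) + 1) ^ p * (Real.exp 1 * ((n * d : ℕ) + 1)) ^ p * r ^ n)
      Filter.atTop (nhds 0) := by
  have h := (tendsto_pow_const_mul_const_pow_of_abs_lt_one (2 * p) (by rwa [abs_of_nonneg hr0] : |r| < 1)).const_mul
    ((4 * Real.exp 1 * d) ^ p)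
  rw [mul_zero] at h
  refine squeeze_zero' (Filter.Eventually.of_forall fun n => by positivity) ?_ h
  filter_upwards [Filter.eventually_ge_atTop 1] with n hn
  have hn1 : (1:ℝ) ≤ n := by exact_mod_cast hn
  have hd1 : (1:ℝ) ≤ d := by exact_mod_cast hd
  have hnd : (1:ℝ) ≤ n * d := by nlinarith
  have : (4 * Real.exp 1 * d) ^ p * ((n:ℝ) ^ (2 * p) * r ^ n) = (2 * n) ^ p * (Real.exp 1 * (2 * (n * d))) ^ p * r ^ n := by
    rw [← mul_pow, pow_mul, ← mul_assoc, ← mul_pow]; congr 2; ring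
  rw [this]
  push_cast
  gcongr
  · linarith
  · linarith

open Classical in
lemma total_bound (d : ℕ) (hd : 3 ≤ d) (p : ℕ) [Fact p.Prime] (hgcd : Nat.gcd p d = 1) :
    ∃ g : ℕ → ℝ, Filter.Tendsto g Filter.atTop (nhds 0) ∧ ∀ n, 0 < n →
      ∑ v ∈ univ.filter (fun v : Fin n → ZMod p => v ≠ 0), (ZZ d v : ℝ) ≤ (n * d).factorial * (1 + g n) := by
  obtain ⟨δ, t1, t2, hδ0, hδ1, ht1, ht11, ht2, ht21, hpt, hδt, hdδ, hδ2, hr1, hr2, hr3⟩ :=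
    params_exist p d (Fact.out : p.Prime).one_lt.le
  obtain ⟨q, hq0, hq1, hmid⟩ := mid_total hd hgcd δ t1 hδ0 ht1
  set C := Real.exp ((p:ℝ) + 2^d) with hC
  set r1 := (1 + ((p:ℝ) * t1) ^ 2) * Real.sqrt ((1 + ((p:ℝ) * t1) ^ 2) * (1 - δ)) with hr1d
  set r2 := Real.exp (p * ((p:ℝ) * t2) ^ 3 - t1 ^ 2 / 4) with hr2d
  set r3 := Real.exp (δ * Real.log (1 / δ) + p * δ - t2 ^ 2 / 4) with hr3d
  let D : ℝ → ℕ → ℝ := fun r n => ((n:ℝ) + 1) ^ p * (Real.exp 1 * ((n * d : ℕ) + 1)) ^ p * r ^ n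
  have hD : ∀ r, 0 ≤ r → r < 1 → Filter.Tendsto (D r) Filter.atTop (nhds 0) := fun r h0 h1 =>
    poly_tendsto p d (by omega) r h0 h1
  refine ⟨fun n => 16 * C * (Real.sqrt n)⁻¹ + D q n + D r1 n + 2 * p ^ 2 * D r2 n + 2 * p ^ 2 * D r3 n, ?_, ?_⟩
  · have hs : Filter.Tendsto (fun n : ℕ => (Real.sqrt n)⁻¹) Filter.atTop (nhds 0) :=
      (Real.tendsto_sqrt_atTop.comp tendsto_natCast_atTop_atTop).inv_tendsto_atTop
    have := ((((hs.const_mul (16 * C)).add (hD q hq0 hq1)).add (hD r1 (by positivity) hr1)).add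
      ((hD r2 (Real.exp_pos _).le (by rw [hr2d, Real.exp_lt_one_iff]; exact hr2)).const_mul (2 * (p:ℝ) ^ 2))).add
      ((hD r3 (Real.exp_pos _).le (by rw [hr3d, Real.exp_lt_one_iff]; exact hr3)).const_mul (2 * (p:ℝ) ^ 2))
    simpa using this
  · intro n hn
    have hU := U_total hn hd hgcd δ t1 t2 hδ0 hδ1 ht1 ht11 ht2 ht21 hpt hδt hdδ hδ2
    have hsm := sm_total (p := p) hd δ hδ0 hδ2 hn
    have hmi := hmid n hn
    rw [← hr1d, ← hr2d, ← hr3d, ← hC] at hU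
    rw [← hC] at hsm
    set K : ℝ := ((n * d).factorial : ℝ) with hK
    have hK0 : 0 < K := by rw [hK]; positivity
    have hsplit : ∑ v ∈ univ.filter (fun v : Fin n → ZMod p => v ≠ 0), (ZZ d v : ℝ)
        ≤ (∑ v ∈ univ.filter (fun v : Fin n → ZMod p => (off 0 v:ℝ) ≤ δ*n ∧ v ≠ 0), (ZZ d v:ℝ))
        + (∑ v ∈ univ.filter (fun v : Fin n → ZMod p => ¬ ((off 0 v : ℝ) ≤ δ * n) ∧ ¬ nearU t1 v), (ZZ d v : ℝ))
        + ∑ v ∈ univ.filter (fun v : Fin n → ZMod p => nearU t1 v), (ZZ d v : ℝ) := by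
      simp only [Finset.sum_filter]
      rw [← Finset.sum_add_distrib, ← Finset.sum_add_distrib]
      apply Finset.sum_le_sum
      intro v _
      have hz : (0:ℝ) ≤ ZZ d v := by positivity
      by_cases a : v = 0 <;> by_cases b : (off 0 v : ℝ) ≤ δ * n <;> by_cases c : nearU t1 v <;>
        simp [a, b, c] <;> (try split_ifs) <;> linarith
    have hn1 : (1:ℝ) ≤ n := by exact_mod_cast hn
    set Q : ℝ := (Real.exp 1 * ((n * d : ℕ) + 1)) ^ p with hQ
    have hN1 : (1:ℝ) ≤ ((n:ℝ) + 1) ^ p := one_le_pow₀ (by linarith)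
    have hQ1 : (1:ℝ) ≤ Q := by
      apply one_le_pow₀
      have h1 : (1:ℝ) ≤ Real.exp 1 := Real.one_le_exp (by norm_num)
      have h2 : (1:ℝ) ≤ ((n * d : ℕ):ℝ) + 1 := by
        have : (0:ℝ) ≤ ((n * d : ℕ):ℝ) := by positivity
        linarith
      nlinarith
    have d2 : 2 * p ^ 2 * Q * r2 ^ n ≤ 2 * p ^ 2 * D r2 n := by
      calc 2 * p ^ 2 * Q * r2 ^ n = 2 * p ^ 2 * (1 * Q * r2 ^ n) := by ring
        _ ≤ _ := by simp only [D]; gcongr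
    have d3 : 2 * p ^ 2 * r3 ^ n ≤ 2 * p ^ 2 * D r3 n := by
      calc 2 * p ^ 2 * r3 ^ n = 2 * p ^ 2 * (1 * 1 * r3 ^ n) := by ring
        _ ≤ _ := by simp only [D]; gcongr
    have hU2 : ∑ v ∈ univ.filter (fun v : Fin n → ZMod p => nearU t1 v), (ZZ d v : ℝ) ≤
        K * (1 + 8 * C / Real.sqrt n + D r1 n + 2 * p ^ 2 * D r2 n + 2 * p ^ 2 * D r3 n) := by
      refine hU.trans ?_
      gcongr
    have hmi2 : (∑ v ∈ univ.filter (fun v : Fin n → ZMod p => ¬ ((off 0 v : ℝ) ≤ δ * n) ∧ ¬ nearU t1 v), (ZZ d v : ℝ))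
        ≤ K * D q n := by
      convert hmi
    have hsm2 : (∑ v ∈ univ.filter (fun v : Fin n → ZMod p => (off 0 v:ℝ) ≤ δ*n ∧ v ≠ 0), (ZZ d v:ℝ))
        ≤ K * (8 * C / Real.sqrt n) := by
      convert hsm
    refine hsplit.trans ((add_le_add (add_le_add hsm2 hmi2) hU2).trans (le_of_eq ?_))
    rw [div_eq_mul_inv]
    ring

lemma adj_mulVec {n d p : ℕ} (P : Equiv.Perm (Fin n × Fin d)) (v : Fin n → ZMod p) (k : Fin n) :
    (((adjMat n d P).map (Int.cast : ℤ → ZMod p)).mulVec v) k = ∑ i, v (P (k, i)).1 := by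
  simp only [Matrix.mulVec, dotProduct, Matrix.map_apply, adjMat]
  rw [← Finset.sum_fiberwise (s := univ) (g := fun i : Fin d => (P (k, i)).1)]
  apply Finset.sum_congr rfl
  intro l _
  rw [Finset.sum_congr rfl (g := fun _ => v l)]
  · rw [Finset.sum_const, nsmul_eq_mul]; push_cast; rfl
  · intro x hx
    simp only [Finset.mem_filter] at hx
    rw [hx.2]

open Classical in
lemma sing_count (n d p : ℕ) [Fact p.Prime] :
    ((univ.filter (fun P : Equiv.Perm (Fin n × Fin d) =>
          ((adjMat n d P).map (Int.cast : ℤ → ZMod p)).det = 0)).card) * (p - 1)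
      ≤ ∑ v ∈ univ.filter (fun v : Fin n → ZMod p => v ≠ 0), ZZ d v := by
  let R : Equiv.Perm (Fin n × Fin d) → (Fin n → ZMod p) → Prop := fun P v => ∀ k, ∑ i, v (P (k, i)).1 = 0
  have h1 : ∑ v ∈ univ.filter (fun v : Fin n → ZMod p => v ≠ 0), ZZ d v
      = ∑ P : Equiv.Perm (Fin n × Fin d), (univ.filter (fun v : Fin n → ZMod p => v ≠ 0 ∧ R P v)).card := by
    have e : ∀ v : Fin n → ZMod p, ZZ d v = ∑ P, if R P v then 1 else 0 := by
      intro v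
      rw [← Finset.card_filter]
      unfold ZZ
      congr!
    simp only [e]
    rw [Finset.sum_comm]
    apply Finset.sum_congr rfl
    intro P _
    rw [← Finset.card_filter, Finset.filter_filter]
  rw [h1]
  rw [← smul_eq_mul, ← Finset.sum_const]
  refine le_trans (Finset.sum_le_sum (g := fun P => (univ.filter (fun v : Fin n → ZMod p => v ≠ 0 ∧ R P v)).card) ?_)
      (Finset.sum_le_sum_of_subset (Finset.filter_subset _ _))
  intro P hP
  simp only [Finset.mem_filter, Finset.mem_univ, true_and] at hP
  obtain ⟨v, hv0, hv⟩ := Matrix.exists_mulVec_eq_zero_iff.mpr hP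
  have hcard : (univ.erase (0 : ZMod p)).card = p - 1 := by
    rw [Finset.card_erase_of_mem (mem_univ _), Finset.card_univ, ZMod.card]
  rw [← hcard]
  apply Finset.card_le_card_of_injOn (fun c => c • v)
  · intro c hc
    have hc0 : c ≠ 0 := by simpa using hc
    simp only [Finset.coe_filter, Finset.mem_univ, true_and, Set.mem_ofPred_eq]
    refine ⟨smul_ne_zero hc0 hv0, fun k => ?_⟩
    have := congrFun hv k
    rw [adj_mulVec] at this
    simp only [Pi.smul_apply, smul_eq_mul, ← Finset.mul_sum, this]
    simp
  · intro c _ c' _ h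
    exact smul_left_injective _ hv0 h

theorem directed_singular_Fp (d : ℕ) (hd : 3 ≤ d) (p : ℕ) [Fact p.Prime] (hp : Odd p)
    (hgcd : Nat.gcd p d = 1) (ε : ℝ) (hε : 0 < ε) :
    ∃ N : ℕ, ∀ n : ℕ, N ≤ n →
      ((Finset.univ.filter (fun P : Equiv.Perm (Fin n × Fin d) =>
          ((adjMat n d P).map (Int.cast : ℤ → ZMod p)).det = 0)).card : ℝ)
        ≤ (1 + ε) / ((p : ℝ) - 1) * ((n * d).factorial : ℝ) := by
  obtain ⟨g, hg, hb⟩ := total_bound d hd p hgcd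
  have hev := (hg.eventually (gt_mem_nhds hε)).and (Filter.eventually_gt_atTop 0)
  obtain ⟨N, hN⟩ := Filter.eventually_atTop.mp hev
  refine ⟨N, fun n hn => ?_⟩
  obtain ⟨h1, h2⟩ := hN n hn
  have h3 := hb n h2
  have hp1 : 1 < p := (Fact.out : p.Prime).one_lt
  have hp1' : (0:ℝ) < (p:ℝ) - 1 := by
    have : (1:ℝ) < p := by exact_mod_cast hp1
    linarith
  have h4 := sing_count n d p
  have h5 : ((univ.filter (fun P : Equiv.Perm (Fin n × Fin d) =>
          ((adjMat n d P).map (Int.cast : ℤ → ZMod p)).det = 0)).card : ℝ) * ((p:ℝ) - 1)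
      ≤ ∑ v ∈ univ.filter (fun v : Fin n → ZMod p => v ≠ 0), (ZZ d v : ℝ) := by
    have : ((p - 1 : ℕ) : ℝ) = (p:ℝ) - 1 := by rw [Nat.cast_sub hp1.le]; simp
    rw [← this]
    classical
    have h6 : ((((univ.filter (fun P : Equiv.Perm (Fin n × Fin d) =>
          ((adjMat n d P).map (Int.cast : ℤ → ZMod p)).det = 0)).card) * (p - 1) : ℕ) : ℝ)
      ≤ ((∑ v ∈ univ.filter (fun v : Fin n → ZMod p => v ≠ 0), ZZ d v : ℕ) : ℝ) := by
      rw [Nat.cast_le]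
      convert h4
    rw [Nat.cast_mul, Nat.cast_sum] at h6
    convert h6
  have h7 : ∑ v ∈ univ.filter (fun v : Fin n → ZMod p => v ≠ 0), (ZZ d v : ℝ) ≤ (n * d).factorial * (1 + g n) := by
    convert h3
  rw [div_mul_eq_mul_div, le_div_iff₀ hp1']
  refine h5.trans (h7.trans ?_)
  rw [mul_comm]
  gcongr
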